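/- arXiv:2603.19490 — 7 statements merged into one kernel-verified Lean document; each statement's English description precedes it below -/
import Mathlib

section
/- There exists a universal constant C > 0 such that the following holds for every positive integer n. Let μ_A and μ_B be probability distributions on the power set 2^[n] of [n] = {1,…,n}, and let ε be a real number with 2^{-n} < ε < 1/2 such that P_{A∼μ_A, B∼μ_B}[A ∩ B = ∅] ≥ ε (the sets A and B are sampled independently). Then there exist families 𝒜, ℬ ⊆ 2^[n] with μ_A(𝒜) ≥ 2^{-C·√(n·log₂(1/ε))} and μ_B(ℬ) ≥ 2^{-C·√(n·log₂(1/ε))} such that A ∩ B = ∅ for every pair (A, B) ∈ 𝒜 × ℬ. -/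
open Finset

/-!
Write `L = log₂ (1/ε)`, `k = ⌊√(n/L)⌋` and `s = 16n/(k+1)`. Call a pair `(A, B)` an edge if
`A ∩ B = ∅`. Sample an edge `(A, B)` from `μA × μB` conditioned on disjointness, then independent
neighbours `A₁, …, A_k` of `B` and `B₁, …, B_k` of `A`, and set `V = ⋃ Aᵢ`, `U = ⋃ Bᵢ`.

Given `B`, the sets `A, A₁, …, A_k` are i.i.d., so each element `x` lies in `A \ V` with
probability `t (1 - t)^k ≤ 1/(k+1)`, where `t` is the probability that `x ∈ A`. Hence
`|A \ V|` has expectation at most `n/(k+1)`, and likewise `|B \ U|`. As an edge rarely has an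
endpoint of degree below `ε/8`, the unnormalised weight of the configurations with
`|A \ V| ≤ s`, `|B \ U| ≤ s` is at least `(ε/8)^(2k+1)`. Averaging fixes `U` and `V`
(`exists_unions`).

Finally choose `S ⊆ [n]` uniformly and put `𝒜 = {A | A ∩ U = ∅, A \ V ⊆ S}` and
`ℬ = {B | B ∩ V = ∅, (B \ U) ∩ S = ∅}`. These families are cross-disjoint, and each surviving
edge lies in `𝒜 × ℬ` with probability at least `2^(-2s)` (`exists_split`). Both losses, `ε^O(k)`
and `2^(-2s)`, are `2^(-O(√(nL)))`.

The computations avoid dividing by degrees: all conditional probabilities are kept multiplied by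
the appropriate power of the degree.
-/

namespace CrossDisjoint

variable {n : ℕ}

/-! ### Degrees and random neighbours -/

/-- The `μ`-mass of the sets disjoint from `B`. -/
noncomputable def deg (μ : Finset (Fin n) → ℝ) (B : Finset (Fin n)) : ℝ :=
  ∑ A, if Disjoint A B then μ A else 0

/-- The `μ`-mass of the sets disjoint from `B` that do not contain `x`. -/
noncomputable def degAvoid (μ : Finset (Fin n) → ℝ) (B : Finset (Fin n)) (x : Fin n) : ℝ :=
  ∑ A, if Disjoint A B ∧ x ∉ A then μ A else 0

/-- The expected size of `A \ (A₁ ∪ ⋯ ∪ A_k)` for independent random neighbours `Aᵢ` of `B`,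
multiplied by `deg μ B ^ k`. -/
noncomputable def miss (μ : Finset (Fin n) → ℝ) (k : ℕ) (A B : Finset (Fin n)) : ℝ :=
  ∑ x ∈ A, degAvoid μ B x ^ k

/-- The `μ^k`-mass of the tuples of neighbours of `B` whose union covers all but at most `s`
elements of `A`. -/
noncomputable def coverMass (μ : Finset (Fin n) → ℝ) (k : ℕ) (s : ℝ) (A B : Finset (Fin n)) : ℝ :=
  ∑ f : Fin k → Finset (Fin n), (∏ i, μ (f i)) *
    if Disjoint (univ.biUnion f) B ∧ ((A \ univ.biUnion f).card : ℝ) ≤ s then 1 else 0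

/-- The edge `(A, B)` is typical as seen from `B`: the degree of `B` is not small, and random
neighbours of `B` are expected to cover all but `s / 2` elements of `A`. -/
def Typical (μ : Finset (Fin n) → ℝ) (k : ℕ) (s ε : ℝ) (A B : Finset (Fin n)) : Prop :=
  ε / 8 ≤ deg μ B ∧ miss μ k A B ≤ s / 2 * deg μ B ^ k

lemma deg_nonneg {μ : Finset (Fin n) → ℝ} (hμ : ∀ A, 0 ≤ μ A) (B : Finset (Fin n)) :
    0 ≤ deg μ B :=
  sum_nonneg fun A _ => by split_ifs <;> simp [hμ]

lemma degAvoid_nonneg {μ : Finset (Fin n) → ℝ} (hμ : ∀ A, 0 ≤ μ A) (B : Finset (Fin n))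
    (x : Fin n) : 0 ≤ degAvoid μ B x :=
  sum_nonneg fun A _ => by split_ifs <;> simp [hμ]

lemma degAvoid_le_deg {μ : Finset (Fin n) → ℝ} (hμ : ∀ A, 0 ≤ μ A) (B : Finset (Fin n))
    (x : Fin n) : degAvoid μ B x ≤ deg μ B := by
  refine sum_le_sum fun A _ => ?_
  have := hμ A
  split_ifs <;> tauto

lemma miss_nonneg {μ : Finset (Fin n) → ℝ} (hμ : ∀ A, 0 ≤ μ A) (k : ℕ) (A B : Finset (Fin n)) :
    0 ≤ miss μ k A B :=
  sum_nonneg fun x _ => pow_nonneg (degAvoid_nonneg hμ B x) k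

lemma coverMass_nonneg {μ : Finset (Fin n) → ℝ} (hμ : ∀ A, 0 ≤ μ A) (k : ℕ) (s : ℝ)
    (A B : Finset (Fin n)) : 0 ≤ coverMass μ k s A B :=
  sum_nonneg fun f _ => mul_nonneg (prod_nonneg fun i _ => hμ _) (by split_ifs <;> simp)

/-! ### Covering a set by random neighbours -/

/-- Homogeneous form of `t (1 - t)^k ≤ 1 / (k + 1)`, with `t = (q - r) / q`. -/
lemma sub_mul_pow_le {q r : ℝ} (hr : 0 ≤ r) (hrq : r ≤ q) (k : ℕ) :
    (k + 1) * ((q - r) * r ^ k) ≤ q ^ (k + 1) := by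
  induction k with
  | zero => simp; linarith
  | succ k ih =>
    have h1 : r ^ (k + 1) ≤ q ^ (k + 1) := pow_le_pow_left₀ hr hrq _
    have h2 := mul_le_mul_of_nonneg_left ih hr
    have h3 := mul_le_mul_of_nonneg_left h1 (sub_nonneg.2 hrq)
    push_cast
    calc ((k : ℝ) + 1 + 1) * ((q - r) * r ^ (k + 1))
        = r * ((k + 1) * ((q - r) * r ^ k)) + (q - r) * r ^ (k + 1) := by ring
      _ ≤ r * q ^ (k + 1) + (q - r) * q ^ (k + 1) := add_le_add h2 h3
      _ = q ^ (k + 1 + 1) := by ring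

lemma prod_ite_forall {k : ℕ} (p : Fin k → Prop) [DecidablePred p] (v : Fin k → ℝ) :
    (∏ i, if p i then v i else 0) = (∏ i, v i) * if ∀ i, p i then 1 else 0 := by
  by_cases h : ∀ i, p i
  · simp [h]
  · rw [if_neg h, mul_zero]
    push Not at h
    obtain ⟨i, hi⟩ := h
    exact prod_eq_zero (mem_univ i) (if_neg hi)

/-- Markov's inequality for the number of elements of `A` left uncovered by `k` random neighbours
of `B`. -/
lemma coverMass_ge {μ : Finset (Fin n) → ℝ} (hμ : ∀ A, 0 ≤ μ A) (k : ℕ) {s : ℝ} (hs : 0 < s)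
    (A B : Finset (Fin n)) : deg μ B ^ k - miss μ k A B / s ≤ coverMass μ k s A B := by
  have h1 : deg μ B ^ k = ∑ f : Fin k → Finset (Fin n), (∏ i, μ (f i)) *
      if Disjoint (univ.biUnion f) B then 1 else 0 := by
    rw [deg, Fintype.sum_pow]
    refine sum_congr rfl fun f _ => ?_
    rw [prod_ite_forall]
    simp [disjoint_biUnion_left]
  have h2 : miss μ k A B = ∑ f : Fin k → Finset (Fin n), (∏ i, μ (f i)) *
      if Disjoint (univ.biUnion f) B then ((A \ univ.biUnion f).card : ℝ) else 0 := by
    unfold miss degAvoid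
    simp_rw [Fintype.sum_pow]
    rw [sum_comm]
    refine sum_congr rfl fun f _ => ?_
    simp_rw [prod_ite_forall]
    rw [← mul_sum]
    congr 1
    rw [sum_boole]
    by_cases h : Disjoint (univ.biUnion f) B
    · rw [if_pos h]
      congr 2
      rw [disjoint_biUnion_left] at h
      ext x
      simp at h
      simp [h]
    · rw [if_neg h]
      have : ¬ ∀ i, Disjoint (f i) B := by simpa [disjoint_biUnion_left] using h
      simp only [forall_and, this, false_and, filter_false, card_empty, Nat.cast_zero]
  rw [h1, h2, sum_div, ← sum_sub_distrib]
  refine sum_le_sum fun f _ => ?_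
  rw [mul_div_assoc, ← mul_sub]
  refine mul_le_mul_of_nonneg_left ?_ (prod_nonneg fun i _ => hμ _)
  by_cases h : Disjoint (univ.biUnion f) B
  · simp only [h, if_true, true_and]
    split_ifs with h'
    · have : 0 ≤ ((A \ univ.biUnion f).card : ℝ) / s := by positivity
      linarith
    · have : 1 ≤ ((A \ univ.biUnion f).card : ℝ) / s := by
        rw [le_div_iff₀ hs]; linarith
      linarith
  · simp [h]

lemma Typical.coverMass_ge {μ : Finset (Fin n) → ℝ} (hμ : ∀ A, 0 ≤ μ A) {k : ℕ} {s ε : ℝ}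
    (hs : 0 < s) (hε : 0 < ε) {A B : Finset (Fin n)} (h : Typical μ k s ε A B) :
    (ε / 8) ^ k / 2 ≤ coverMass μ k s A B := by
  have h1 := CrossDisjoint.coverMass_ge hμ k hs A B
  have h2 : miss μ k A B / s ≤ deg μ B ^ k / 2 := by
    rw [div_le_iff₀ hs]; linarith [h.2]
  have h3 : (ε / 8) ^ k ≤ deg μ B ^ k := pow_le_pow_left₀ (by positivity) h.1 k
  linarith

/-- For `A` a random neighbour of `B`, the expected number of elements of `A` missed by `k` further
independent neighbours is at most `n / (k + 1)`. -/
lemma sum_miss_le {μ : Finset (Fin n) → ℝ} (hμ : ∀ A, 0 ≤ μ A) (k : ℕ) (B : Finset (Fin n)) :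
    (k + 1) * ∑ A, (if Disjoint A B then μ A else 0) * miss μ k A B ≤ n * deg μ B ^ (k + 1) := by
  have h1 : ∑ A, (if Disjoint A B then μ A else 0) * miss μ k A B =
      ∑ x, (deg μ B - degAvoid μ B x) * degAvoid μ B x ^ k := by
    have h2 : ∀ x, deg μ B - degAvoid μ B x =
        ∑ A, (if Disjoint A B then μ A else 0) * if x ∈ A then 1 else 0 := by
      intro x
      rw [deg, degAvoid, ← sum_sub_distrib]
      refine sum_congr rfl fun A _ => ?_
      by_cases h : Disjoint A B <;> by_cases h' : x ∈ A <;> simp [h, h']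
    simp_rw [h2, sum_mul]
    rw [sum_comm]
    refine sum_congr rfl fun A _ => ?_
    simp_rw [mul_assoc]
    rw [← mul_sum, miss]
    simp
  rw [h1, mul_sum]
  calc _ ≤ ∑ x : Fin n, deg μ B ^ (k + 1) :=
        sum_le_sum fun x _ => sub_mul_pow_le (degAvoid_nonneg hμ B x) (degAvoid_le_deg hμ B x) k
    _ = _ := by simp

open Classical in
lemma sum_not_typical_le {μ : Finset (Fin n) → ℝ} (hμ : ∀ A, 0 ≤ μ A) (hn : 0 < n) (k : ℕ)
    {ε : ℝ} (hε : 0 < ε) (B : Finset (Fin n)) :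
    ∑ A, (if Disjoint A B then μ A else 0) *
      (if Typical μ k (16 * n / (k + 1)) ε A B then 0 else 1) ≤ ε / 8 + deg μ B / 8 := by
  set s : ℝ := 16 * n / (k + 1) with hs_def
  have hn' : (0 : ℝ) < n := by exact_mod_cast hn
  have hs : 0 < s := by positivity
  have hd := deg_nonneg hμ B
  have hw : ∀ A, 0 ≤ if Disjoint A B then μ A else 0 := fun A => by split_ifs <;> simp [hμ]
  by_cases hq : ε / 8 ≤ deg μ B
  · have hq0 : 0 < deg μ B := lt_of_lt_of_le (by positivity) hq
    have key : (s / 2 * deg μ B ^ k) * ∑ A, (if Disjoint A B then μ A else 0) *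
        (if Typical μ k s ε A B then 0 else 1) ≤
        ∑ A, (if Disjoint A B then μ A else 0) * miss μ k A B := by
      rw [mul_sum]
      refine sum_le_sum fun A _ => ?_
      rw [mul_left_comm]
      refine mul_le_mul_of_nonneg_left ?_ (hw A)
      split_ifs with h
      · simpa using miss_nonneg hμ k A B
      · simp only [Typical, hq, true_and, not_le] at h
        linarith
    have h2 := sum_miss_le hμ k B
    have h3 : (∑ A, (if Disjoint A B then μ A else 0) * miss μ k A B) ≤
        (s / 2 * deg μ B ^ k) * (deg μ B / 8) := by
      have hk : (0 : ℝ) < k + 1 := by positivity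
      rw [← mul_le_mul_iff_right₀ hk]
      refine h2.trans (le_of_eq ?_)
      rw [hs_def]
      field_simp
      ring
    have h4 := le_of_mul_le_mul_left (key.trans h3) (by positivity)
    linarith
  · have : ∑ A, (if Disjoint A B then μ A else 0) *
      (if Typical μ k s ε A B then 0 else 1) ≤ deg μ B := by
      refine sum_le_sum fun A _ => mul_le_of_le_one_right (hw A) ?_
      split_ifs <;> simp
    linarith

/-! ### Fixing the two unions -/

/-- The weight of the edges that lie in no bad event is at least `ε / 2`; each such edge extends
to many tuples on both sides. -/
lemma sum_edge_coverMass_ge {μA μB : Finset (Fin n) → ℝ} (hA : ∀ A, 0 ≤ μA A)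
    (hA1 : ∑ A, μA A = 1) (hB : ∀ B, 0 ≤ μB B) (hB1 : ∑ B, μB B = 1) (hn : 0 < n) (k : ℕ)
    {ε : ℝ} (hε : 0 < ε) (h : ε ≤ ∑ A, ∑ B, (if Disjoint A B then μA A * μB B else 0)) :
    ε / 2 * ((ε / 8) ^ k / 2) ^ 2 ≤
      ∑ A, ∑ B, (if Disjoint A B then μA A * μB B else 0) *
        (coverMass μA k (16 * n / (k + 1)) A B * coverMass μB k (16 * n / (k + 1)) B A) := by
  classical
  set s : ℝ := 16 * n / (k + 1) with hs_def
  have hn' : (0 : ℝ) < n := by exact_mod_cast hn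
  have hs : 0 < s := by positivity
  set e : ℝ := ∑ A, ∑ B, (if Disjoint A B then μA A * μB B else 0) with he
  have heA : e = ∑ B, μB B * deg μA B := by
    rw [he, sum_comm]
    refine sum_congr rfl fun B _ => ?_
    rw [deg, mul_sum]
    refine sum_congr rfl fun A _ => ?_
    split_ifs <;> ring
  have heB : e = ∑ A, μA A * deg μB A := by
    rw [he]
    refine sum_congr rfl fun A _ => ?_
    rw [deg, mul_sum]
    refine sum_congr rfl fun B _ => ?_
    simp only [disjoint_comm (a := B)]
    split_ifs <;> ring
  have bad1 : ∑ A, ∑ B, (if Disjoint A B then μA A * μB B else 0) *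
      (if Typical μA k s ε A B then 0 else 1) ≤ e / 4 := by
    calc _ = ∑ B, μB B * ∑ A, (if Disjoint A B then μA A else 0) *
          (if Typical μA k s ε A B then 0 else 1) := by
          rw [sum_comm]
          refine sum_congr rfl fun B _ => ?_
          rw [mul_sum]
          refine sum_congr rfl fun A _ => ?_
          split_ifs <;> ring
      _ ≤ ∑ B, μB B * (ε / 8 + deg μA B / 8) := sum_le_sum fun B _ =>
          mul_le_mul_of_nonneg_left (sum_not_typical_le hA hn k hε B) (hB B)
      _ = ε / 8 + e / 8 := by
          simp_rw [mul_add, sum_add_distrib, ← sum_mul, hB1, ← mul_div_assoc]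
          rw [← sum_div, ← heA]; ring
      _ ≤ e / 4 := by linarith
  have bad2 : ∑ A, ∑ B, (if Disjoint A B then μA A * μB B else 0) *
      (if Typical μB k s ε B A then 0 else 1) ≤ e / 4 := by
    calc _ = ∑ A, μA A * ∑ B, (if Disjoint B A then μB B else 0) *
          (if Typical μB k s ε B A then 0 else 1) := by
          refine sum_congr rfl fun A _ => ?_
          rw [mul_sum]
          refine sum_congr rfl fun B _ => ?_
          simp only [disjoint_comm (a := B)]
          split_ifs <;> ring
      _ ≤ ∑ A, μA A * (ε / 8 + deg μB A / 8) := sum_le_sum fun A _ =>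
          mul_le_mul_of_nonneg_left (sum_not_typical_le hB hn k hε A) (hA A)
      _ = ε / 8 + e / 8 := by
          simp_rw [mul_add, sum_add_distrib, ← sum_mul, hA1, ← mul_div_assoc]
          rw [← sum_div, ← heB]; ring
      _ ≤ e / 4 := by linarith
  set c : ℝ := (ε / 8) ^ k / 2 with hc
  have hc0 : 0 < c := by positivity
  have main : ∑ A, ∑ B, ((if Disjoint A B then μA A * μB B else 0) * c ^ 2
      - c ^ 2 * ((if Disjoint A B then μA A * μB B else 0) *
      (if Typical μA k s ε A B then 0 else 1))
      - c ^ 2 * ((if Disjoint A B then μA A * μB B else 0) *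
      (if Typical μB k s ε B A then 0 else 1))) ≤
      ∑ A, ∑ B, (if Disjoint A B then μA A * μB B else 0) *
        (coverMass μA k s A B * coverMass μB k s B A) := by
    refine sum_le_sum fun A _ => sum_le_sum fun B _ => ?_
    have hw : 0 ≤ if Disjoint A B then μA A * μB B else 0 := by
      split_ifs
      · exact mul_nonneg (hA A) (hB B)
      · exact le_rfl
    have hwc := mul_nonneg hw (sq_nonneg c)
    have hX := mul_nonneg (coverMass_nonneg hA k s A B) (coverMass_nonneg hB k s B A)
    have hwX := mul_nonneg hw hX
    by_cases h1 : Typical μA k s ε A B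
    · by_cases h2 : Typical μB k s ε B A
      · have g := mul_le_mul (h1.coverMass_ge hA hs hε) (h2.coverMass_ge hB hs hε) hc0.le
          (coverMass_nonneg hA k s A B)
        have := mul_le_mul_of_nonneg_left g hw
        simp only [h1, h2, if_true, mul_zero, sub_zero]
        rw [pow_two]; exact this
      · simp only [h1, h2, if_true, if_false, mul_zero, sub_zero, mul_one]
        linarith
    · by_cases h2 : Typical μB k s ε B A
      · simp only [h1, h2, if_true, if_false, mul_zero, sub_zero, mul_one]
        linarith
      · simp only [h1, h2, if_false, mul_one]
        linarith
  refine le_trans ?_ main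
  simp_rw [sum_sub_distrib, ← mul_sum, ← sum_mul]
  have b1 := mul_le_mul_of_nonneg_left bad1 (sq_nonneg c)
  have b2 := mul_le_mul_of_nonneg_left bad2 (sq_nonneg c)
  have b3 := mul_le_mul_of_nonneg_right h (sq_nonneg c)
  linarith

/-- A weighted average with total weight one is attained or exceeded somewhere. -/
lemma exists_ge_of_sum_mul {ι : Type*} [Fintype ι] {w r : ι → ℝ} {T : ℝ} (hw : ∀ i, 0 ≤ w i)
    (hw1 : ∑ i, w i = 1) (h : T ≤ ∑ i, w i * r i) : ∃ i, T ≤ r i := by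
  by_contra! hlt
  have h1 : ∃ i ∈ univ, 0 < w i := by
    refine exists_lt_of_sum_lt ?_
    simp [hw1]
  obtain ⟨i, _, hi⟩ := h1
  have : ∑ i, w i * r i < ∑ i, w i * T :=
    sum_lt_sum (fun j _ => mul_le_mul_of_nonneg_left (hlt j).le (hw j))
      ⟨i, mem_univ i, mul_lt_mul_of_pos_left (hlt i) hi⟩
  rw [← sum_mul, hw1, one_mul] at this
  linarith

lemma exists_unions {μA μB : Finset (Fin n) → ℝ} (hA : ∀ A, 0 ≤ μA A)
    (hA1 : ∑ A, μA A = 1) (hB : ∀ B, 0 ≤ μB B) (hB1 : ∑ B, μB B = 1) (k : ℕ) {s T : ℝ}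
    (h : T ≤ ∑ A, ∑ B, (if Disjoint A B then μA A * μB B else 0) *
        (coverMass μA k s A B * coverMass μB k s B A)) :
    ∃ U V : Finset (Fin n), T ≤ ∑ A, ∑ B, (if Disjoint A B then μA A * μB B else 0) *
      ((if Disjoint V B ∧ ((A \ V).card : ℝ) ≤ s then 1 else 0) *
        (if Disjoint U A ∧ ((B \ U).card : ℝ) ≤ s then 1 else 0)) := by
  have tot : ∀ μ : Finset (Fin n) → ℝ, ∑ A, μ A = 1 →
      ∑ f : Fin k → Finset (Fin n), ∏ i, μ (f i) = 1 := fun μ h1 => by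
    rw [← Fintype.sum_pow, h1, one_pow]
  have hnn : ∀ μ : Finset (Fin n) → ℝ, (∀ A, 0 ≤ μ A) →
      ∀ f : Fin k → Finset (Fin n), 0 ≤ ∏ i, μ (f i) := fun μ hμ f => prod_nonneg fun i _ => hμ _
  obtain ⟨⟨f, g⟩, hfg⟩ := exists_ge_of_sum_mul
    (ι := (Fin k → Finset (Fin n)) × (Fin k → Finset (Fin n)))
    (w := fun p => (∏ i, μA (p.1 i)) * ∏ i, μB (p.2 i))
    (r := fun p => ∑ A, ∑ B, (if Disjoint A B then μA A * μB B else 0) *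
      ((if Disjoint (univ.biUnion p.1) B ∧ ((A \ univ.biUnion p.1).card : ℝ) ≤ s then 1 else 0) *
        (if Disjoint (univ.biUnion p.2) A ∧ ((B \ univ.biUnion p.2).card : ℝ) ≤ s
          then 1 else 0)))
    (T := T) (fun p => mul_nonneg (hnn μA hA _) (hnn μB hB _))
    (by rw [Fintype.sum_prod_type]
        simp only
        simp_rw [← mul_sum, ← sum_mul]
        rw [tot μA hA1, tot μB hB1, one_mul])
    (by refine h.trans (le_of_eq ?_)
        simp_rw [mul_sum]
        conv_rhs => rw [sum_comm]
        refine sum_congr rfl fun A _ => ?_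
        conv_rhs => rw [sum_comm]
        refine sum_congr rfl fun B _ => ?_
        rw [Fintype.sum_prod_type, coverMass, coverMass, sum_mul_sum, mul_sum]
        refine sum_congr rfl fun f _ => ?_
        rw [mul_sum]
        refine sum_congr rfl fun g _ => ?_
        ring)
  exact ⟨_, _, hfg⟩

/-! ### Random splitting -/

/-- A uniformly random `S` separates two disjoint sets of size at most `s` with probability at least
`2^(-2s)`; applied to `A \ V` and `B \ U`. -/
lemma card_separators_ge {s : ℝ} {P Q : Finset (Fin n)} (hPQ : Disjoint P Q)
    (hP : (P.card : ℝ) ≤ s) (hQ : (Q.card : ℝ) ≤ s) :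
    (2 : ℝ) ^ (-(2 * s)) ≤
      ∑ S : Finset (Fin n), (1 / 2 : ℝ) ^ n * if P ⊆ S ∧ Disjoint Q S then 1 else 0 := by
  have h1 : (univ.filter fun S : Finset (Fin n) => P ⊆ S ∧ Disjoint Q S) = Icc P Qᶜ := by
    ext S
    simp [← le_compl_iff_disjoint_left]
  have hsub : P ⊆ Qᶜ := hPQ.le_compl_right
  have hle := card_le_card hsub
  rw [← mul_sum, sum_boole, h1, card_Icc_finset hsub]
  have hcard : (Qᶜ.card : ℝ) = n - Q.card := by
    have := card_add_card_compl Q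
    rw [Fintype.card_fin] at this
    have h' : (Q.card : ℝ) + Qᶜ.card = n := by exact_mod_cast this
    linarith
  have h2 : ((1 / 2 : ℝ) ^ n) = (2 : ℝ) ^ (-(n : ℝ)) := by
    rw [Real.rpow_neg (by norm_num), Real.rpow_natCast]; simp
  push_cast
  rw [h2, ← Real.rpow_natCast, ← Real.rpow_add (by norm_num)]
  apply Real.rpow_le_rpow_of_exponent_le (by norm_num)
  rw [Nat.cast_sub hle, hcard]
  linarith

lemma exists_split {μA μB : Finset (Fin n) → ℝ} (hA : ∀ A, 0 ≤ μA A) (hB : ∀ B, 0 ≤ μB B)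
    {s T : ℝ} (U V : Finset (Fin n))
    (h : T ≤ ∑ A, ∑ B, (if Disjoint A B then μA A * μB B else 0) *
      ((if Disjoint V B ∧ ((A \ V).card : ℝ) ≤ s then 1 else 0) *
        (if Disjoint U A ∧ ((B \ U).card : ℝ) ≤ s then 1 else 0))) :
    ∃ 𝒜 ℬ : Finset (Finset (Fin n)),
      T * (2 : ℝ) ^ (-(2 * s)) ≤ (∑ A ∈ 𝒜, μA A) * (∑ B ∈ ℬ, μB B) ∧
      ∀ A ∈ 𝒜, ∀ B ∈ ℬ, Disjoint A B := by
  obtain ⟨S, hS⟩ := exists_ge_of_sum_mul (ι := Finset (Fin n)) (w := fun _ => (1 / 2 : ℝ) ^ n)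
    (r := fun S => (∑ A with Disjoint U A ∧ A \ V ⊆ S, μA A) *
      ∑ B with Disjoint V B ∧ Disjoint (B \ U) S, μB B)
    (T := T * (2 : ℝ) ^ (-(2 * s))) (fun _ => by positivity)
    (by simp)
    (by
      calc _ ≤ (∑ A, ∑ B, (if Disjoint A B then μA A * μB B else 0) *
            ((if Disjoint V B ∧ ((A \ V).card : ℝ) ≤ s then 1 else 0) *
            (if Disjoint U A ∧ ((B \ U).card : ℝ) ≤ s then 1 else 0))) *
            (2 : ℝ) ^ (-(2 * s)) := mul_le_mul_of_nonneg_right h (by positivity)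
        _ ≤ ∑ A, ∑ B, ∑ S : Finset (Fin n), (1 / 2 : ℝ) ^ n *
            ((if Disjoint U A ∧ A \ V ⊆ S then μA A else 0) *
              (if Disjoint V B ∧ Disjoint (B \ U) S then μB B else 0)) := by
            simp_rw [sum_mul]
            refine sum_le_sum fun A _ => sum_le_sum fun B _ => ?_
            have hR : 0 ≤ ∑ S : Finset (Fin n), (1 / 2 : ℝ) ^ n *
                ((if Disjoint U A ∧ A \ V ⊆ S then μA A else 0) *
                (if Disjoint V B ∧ Disjoint (B \ U) S then μB B else 0)) := by
              refine sum_nonneg fun S _ => mul_nonneg (by positivity) (mul_nonneg ?_ ?_)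
              · split_ifs <;> simp [hA]
              · split_ifs <;> simp [hB]
            by_cases h1 : Disjoint A B
            swap
            · simpa [h1] using hR
            by_cases h2 : Disjoint V B ∧ ((A \ V).card : ℝ) ≤ s
            swap
            · simpa [h2] using hR
            by_cases h3 : Disjoint U A ∧ ((B \ U).card : ℝ) ≤ s
            swap
            · simpa [h3] using hR
            have hd : Disjoint (A \ V) (B \ U) := h1.mono sdiff_subset sdiff_subset
            have := mul_le_mul_of_nonneg_left (card_separators_ge hd h2.2 h3.2)
              (mul_nonneg (hA A) (hB B))
            rw [if_pos h1, if_pos h2, if_pos h3, mul_one, mul_one]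
            refine this.trans (le_of_eq ?_)
            rw [mul_sum]
            refine sum_congr rfl fun S _ => ?_
            by_cases p : A \ V ⊆ S <;> by_cases q : Disjoint (B \ U) S <;>
              simp [p, q, h2.1, h3.1]
            ring
        _ = _ := by
            simp_rw [sum_filter, sum_mul_sum, mul_sum]
            conv_rhs => rw [sum_comm]
            refine sum_congr rfl fun A _ => ?_
            rw [sum_comm])
  refine ⟨_, _, hS, ?_⟩
  intro A hA' B hB'
  simp only [mem_filter, mem_univ, true_and] at hA' hB'
  rw [disjoint_left]
  intro x hxA hxB
  have hxU : x ∉ U := fun hx => disjoint_left.1 hA'.1 hx hxA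
  have hxV : x ∉ V := fun hx => disjoint_left.1 hB'.1 hx hxB
  exact disjoint_left.1 hB'.2 (mem_sdiff.2 ⟨hxB, hxU⟩) (hA'.2 (mem_sdiff.2 ⟨hxA, hxV⟩))

/-! ### Choice of parameters -/

/-- With `k = ⌊√(n/L)⌋` all losses together are at most `2^(-44 √(nL))`. -/
lemma exists_k_bound {n : ℕ} {ε : ℝ} (h1 : (2 : ℝ) ^ (-(n : ℝ)) < ε) (h2 : ε < 1 / 2) :
    ∃ k : ℕ, (2 : ℝ) ^ (-(44 * Real.sqrt (n * Real.logb 2 (1 / ε)))) ≤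
      ε / 2 * ((ε / 8) ^ k / 2) ^ 2 * (2 : ℝ) ^ (-(2 * (16 * n / (k + 1) : ℝ))) := by
  have hε : 0 < ε := lt_trans (by positivity) h1
  set L := Real.logb 2 (1 / ε) with hL
  have hεL : ε = (2 : ℝ) ^ (-L) := by
    rw [hL, one_div, Real.logb_inv, neg_neg, Real.rpow_logb (by norm_num) (by norm_num) hε]
  have hLn : L < n := by
    rw [hεL, Real.rpow_lt_rpow_left_iff (by norm_num)] at h1
    linarith
  have hL1 : 1 < L := by
    have : (2 : ℝ) ^ (-L) < (2 : ℝ) ^ (-1 : ℝ) := by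
      rw [← hεL, Real.rpow_neg_one]; linarith
    rw [Real.rpow_lt_rpow_left_iff (by norm_num)] at this
    linarith
  have hn : (0 : ℝ) < n := by linarith
  have hL0 : 0 < L := by linarith
  set r := Real.sqrt (n / L) with hr
  have hr0 : 0 < r := Real.sqrt_pos.2 (by positivity)
  have hrr : r * r = n / L := Real.mul_self_sqrt (by positivity)
  have hr1 : 1 ≤ r := by
    rw [hr, Real.one_le_sqrt, le_div_iff₀ hL0]; linarith
  have hnr : (n : ℝ) = L * r * r := by
    rw [mul_assoc, hrr]; field_simp
  have hsq : Real.sqrt (n * L) = L * r := by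
    rw [hnr, show L * r * r * L = (L * r) * (L * r) by ring]
    exact Real.sqrt_mul_self (by positivity)
  refine ⟨⌊r⌋₊, ?_⟩
  set k := ⌊r⌋₊
  have hk1 : (k : ℝ) ≤ r := Nat.floor_le hr0.le
  have hk2 : r < k + 1 := Nat.lt_floor_add_one r
  have e8 : ε / 8 = (2 : ℝ) ^ (-L - 3) := by
    rw [Real.rpow_sub (by norm_num), ← hεL]; norm_num
  have hpow : (ε / 8) ^ k = (2 : ℝ) ^ ((-L - 3) * k) := by
    rw [e8, Real.rpow_mul (by norm_num), Real.rpow_natCast]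
  have hall : ε / 2 * ((ε / 8) ^ k / 2) ^ 2 = (2 : ℝ) ^ (-L - 3 + (-L - 3) * k * 2) := by
    rw [Real.rpow_add (by norm_num), ← e8, Real.rpow_mul (by norm_num) _ 2, ← hpow,
      Real.rpow_two]
    ring
  rw [hall, ← Real.rpow_add (by norm_num), hsq]
  apply Real.rpow_le_rpow_of_exponent_le (by norm_num)
  have hs : 16 * (n : ℝ) / (k + 1) ≤ 16 * (L * r) := by
    rw [div_le_iff₀ (by positivity), hnr]
    nlinarith [mul_pos hL0 hr0]
  have hk0 : (0 : ℝ) ≤ k := by positivity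
  -- Since `1 < L`, the constant factors cost at most `L + 3 ≤ 4 L` per use of `ε / 8`.
  have a1 : (L + 3) * k ≤ 4 * (L * r) := by nlinarith
  have a2 : L + 3 ≤ 4 * (L * r) := by nlinarith
  linarith

lemma sum_le_one_of_subset {μ : Finset (Fin n) → ℝ} (hμ : ∀ A, 0 ≤ μ A) (h1 : ∑ A, μ A = 1)
    (𝒜 : Finset (Finset (Fin n))) : ∑ A ∈ 𝒜, μ A ≤ 1 :=
  h1 ▸ sum_le_sum_of_subset_of_nonneg (subset_univ 𝒜) fun A _ _ => hμ A

end CrossDisjoint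

/-- There is a universal constant `C > 0` such that for every `n ≥ 1`,
probability distributions `μA, μB` on `2^[n]`, and `ε` with `2^{-n} < ε < 1/2` such that
independently sampled sets are disjoint with probability at least `ε`, there exist families
`𝒜, ℬ` of measure at least `2^{-C√(n log₂(1/ε))}` that are fully cross-disjoint. -/
theorem statement0 :
    ∃ C : ℝ, 0 < C ∧ ∀ n : ℕ, 0 < n →
      ∀ μA μB : Finset (Fin n) → ℝ,
        (∀ A, 0 ≤ μA A) → (∑ A, μA A) = 1 →
        (∀ B, 0 ≤ μB B) → (∑ B, μB B) = 1 →
        ∀ ε : ℝ, (2 : ℝ) ^ (-(n : ℝ)) < ε → ε < 1 / 2 →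
          ε ≤ ∑ A, ∑ B, (if Disjoint A B then μA A * μB B else 0) →
          ∃ 𝒜 ℬ : Finset (Finset (Fin n)),
            (2 : ℝ) ^ (-(C * Real.sqrt (n * Real.logb 2 (1 / ε)))) ≤ ∑ A ∈ 𝒜, μA A ∧
            (2 : ℝ) ^ (-(C * Real.sqrt (n * Real.logb 2 (1 / ε)))) ≤ ∑ B ∈ ℬ, μB B ∧
            ∀ A ∈ 𝒜, ∀ B ∈ ℬ, Disjoint A B := by
  refine ⟨44, by norm_num, ?_⟩
  intro n hn μA μB hA hA1 hB hB1 ε h1 h2 h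
  have hε : 0 < ε := lt_trans (by positivity) h1
  obtain ⟨k, hk⟩ := CrossDisjoint.exists_k_bound h1 h2
  obtain ⟨U, V, hUV⟩ := CrossDisjoint.exists_unions hA hA1 hB hB1 k
    (CrossDisjoint.sum_edge_coverMass_ge hA hA1 hB hB1 hn k hε h)
  obtain ⟨𝒜, ℬ, hprod, hdisj⟩ := CrossDisjoint.exists_split hA hB U V hUV
  have hle := hk.trans hprod
  refine ⟨𝒜, ℬ, hle.trans ?_, hle.trans ?_, hdisj⟩
  · exact mul_le_of_le_one_right (sum_nonneg fun A _ => hA A)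
      (CrossDisjoint.sum_le_one_of_subset hB hB1 ℬ)
  · exact mul_le_of_le_one_left (sum_nonneg fun B _ => hB B)
      (CrossDisjoint.sum_le_one_of_subset hA hA1 𝒜)
end

section
/- Let n ≥ 2 and ℓ ≥ 1 be integers, let μ_A and μ_B be probability distributions on the power set 2^[n], and let ε ∈ (0, 1/2) be a real number satisfying ε^ℓ ≥ 2^{-n} and P_{A∼μ_A, B∼μ_B}[A ∩ B = ∅] ≥ ε (the sets A and B are sampled independently). Then there exist families 𝒜, ℬ ⊆ 2^[n] with μ_A(𝒜) ≥ 2^{-3n/ℓ} and μ_B(ℬ) ≥ ε^ℓ/2 such that A ∩ B = ∅ for every pair (A, B) ∈ 𝒜 × ℬ. -/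
/-!
The proof is by dependent random choice. Draw `A₁, …, A_ℓ` independently from `μA`, and let `S` be
their union. The families are `𝒜 = {A | A ⊆ S}` and `ℬ = {B | S ∩ B = ∅}`, which are cross-disjoint
for every `S`. By the power mean inequality, the expectation of `μB ℬ` is
`E_B [P_A[A ∩ B = ∅] ^ ℓ] ≥ ε ^ ℓ`. For a fixed set `T` with `μA {A | A ⊆ T} < 2 ^ (-3n/ℓ)`, the
probability that `S ⊆ T` is at most `2 ^ (-3n)`, so by the union bound over the `2 ^ n` sets `T`,
`S` is such a set with probability at most `2 ^ (-2n) < ε ^ ℓ / 2`. If every other `S` had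
`μB ℬ < ε ^ ℓ / 2`, the expectation of `μB ℬ` would be less than `ε ^ ℓ`, a contradiction.

Expectations over `(A₁, …, A_ℓ)` are sums over `p : Fin ℓ → Finset (Fin n)` weighted by
`∏ i, μA (p i)`; `sum_prod_forall` evaluates the probabilities that occur.
-/

open Finset

/-- The probability that `ℓ` independent samples all satisfy `P` is the `ℓ`-th power of the
probability that one does. -/
lemma sum_prod_forall {α : Type*} [Fintype α] (ℓ : ℕ) (μ : α → ℝ) (P : α → Prop)
    [DecidablePred P] :
    ∑ p : Fin ℓ → α, (if ∀ i, P (p i) then ∏ i, μ (p i) else 0)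
      = (∑ a, if P a then μ a else 0) ^ ℓ := by
  rw [Fintype.sum_pow]
  refine Finset.sum_congr rfl fun p _ => ?_
  split_ifs with h
  · exact Finset.prod_congr rfl fun i _ => (if_pos (h i)).symm
  · push Not at h
    obtain ⟨i, hi⟩ := h
    exact (Finset.prod_eq_zero (Finset.mem_univ i) (if_neg hi)).symm

/-- The numerical estimate for the error term of the union bound: `2 ^ n` sets, each with probability at
most `(2 ^ (-3n/ℓ)) ^ ℓ = 2 ^ (-3n)`. -/
lemma error_lt (n ℓ : ℕ) (hn : 2 ≤ n) (hℓ : 1 ≤ ℓ) (e : ℝ) (he : (2 : ℝ) ^ (-(n : ℝ)) ≤ e) :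
    2 ^ n * ((2 : ℝ) ^ (-(3 * (n : ℝ) / (ℓ : ℝ)))) ^ ℓ < e / 2 := by
  have hl : (ℓ : ℝ) ≠ 0 := by positivity
  have h1 : ((2 : ℝ) ^ (-(3 * (n : ℝ) / (ℓ : ℝ)))) ^ ℓ = (2 : ℝ) ^ (-(3 * (n : ℝ))) := by
    rw [← Real.rpow_natCast, ← Real.rpow_mul (by norm_num)]
    congr 1
    field_simp
  have h2 : (2 : ℝ) ^ n * (2 : ℝ) ^ (-(3 * (n : ℝ))) = (2 : ℝ) ^ (-(2 * (n : ℝ))) := by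
    rw [← Real.rpow_natCast, ← Real.rpow_add (by norm_num)]
    congr 1
    ring
  have h3 : (2 : ℝ) ^ (-(2 * (n : ℝ))) < (2 : ℝ) ^ (-(n : ℝ) - 1) := by
    apply Real.rpow_lt_rpow_of_exponent_lt (by norm_num)
    have : (2 : ℝ) ≤ n := by exact_mod_cast hn
    linarith
  rw [Real.rpow_sub_one (by norm_num)] at h3
  rw [h1, h2]
  linarith

/-- quantitative version of the main lemma with explicit parameter `ℓ`. -/
theorem statement1 (n ℓ : ℕ) (hn : 2 ≤ n) (hℓ : 1 ≤ ℓ)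
    (μA μB : Finset (Fin n) → ℝ)
    (hA0 : ∀ A, 0 ≤ μA A) (hA1 : (∑ A, μA A) = 1)
    (hB0 : ∀ B, 0 ≤ μB B) (hB1 : (∑ B, μB B) = 1)
    (ε : ℝ) (hε0 : 0 < ε) (hε2 : ε < 1 / 2)
    (hεn : (2 : ℝ) ^ (-(n : ℝ)) ≤ ε ^ ℓ)
    (hP : ε ≤ ∑ A, ∑ B, (if Disjoint A B then μA A * μB B else 0)) :
    ∃ 𝒜 ℬ : Finset (Finset (Fin n)),
      (2 : ℝ) ^ (-(3 * (n : ℝ) / (ℓ : ℝ))) ≤ ∑ A ∈ 𝒜, μA A ∧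
      ε ^ ℓ / 2 ≤ ∑ B ∈ ℬ, μB B ∧
      ∀ A ∈ 𝒜, ∀ B ∈ ℬ, Disjoint A B := by
  have herr := error_lt n ℓ hn hℓ _ hεn
  set δ : ℝ := (2 : ℝ) ^ (-(3 * (n : ℝ) / (ℓ : ℝ))) with hδ
  by_contra hcon
  let a : Finset (Fin n) → ℝ := fun S => ∑ A, if A ⊆ S then μA A else 0
  let b : Finset (Fin n) → ℝ := fun S => ∑ B, if Disjoint S B then μB B else 0
  let q : Finset (Fin n) → ℝ := fun B => ∑ A, if Disjoint A B then μA A else 0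
  let w : (Fin ℓ → Finset (Fin n)) → ℝ := fun p => ∏ i, μA (p i)
  let U : (Fin ℓ → Finset (Fin n)) → Finset (Fin n) := fun p => univ.biUnion p
  have ha0 : ∀ S, 0 ≤ a S := fun S => Finset.sum_nonneg fun A _ => by
    split_ifs
    exacts [hA0 A, le_rfl]
  have hq0 : ∀ B, 0 ≤ q B := fun B => Finset.sum_nonneg fun A _ => by
    split_ifs
    exacts [hA0 A, le_rfl]
  have hw0 : ∀ p, 0 ≤ w p := fun p => Finset.prod_nonneg fun i _ => hA0 _
  have hw1 : ∑ p, w p = 1 := by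
    rw [← Fintype.sum_pow, hA1, one_pow]
  have hb1 : ∀ S, b S ≤ 1 := fun S => by
    rw [← hB1]
    refine Finset.sum_le_sum fun B _ => ?_
    split_ifs
    exacts [le_rfl, hB0 B]
  have hbad : ∀ S, δ ≤ a S → b S < ε ^ ℓ / 2 := by
    intro S hS
    by_contra! hb
    refine hcon ⟨univ.filter (· ⊆ S), univ.filter (Disjoint S ·), ?_, ?_, ?_⟩
    · rwa [Finset.sum_filter]
    · rwa [Finset.sum_filter]
    · intro A hA B hB
      simp only [Finset.mem_filter, Finset.mem_univ, true_and] at hA hB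
      exact hB.mono_left hA
  -- The expectation of `μB {B | S ∩ B = ∅}` is at least `ε ^ ℓ`.
  have hlow : ε ^ ℓ ≤ ∑ p, w p * b (U p) := by
    have hm : ε ≤ ∑ B, μB B * q B := by
      refine hP.trans_eq ?_
      rw [Finset.sum_comm]
      refine Finset.sum_congr rfl fun B _ => ?_
      rw [Finset.mul_sum]
      refine Finset.sum_congr rfl fun A _ => ?_
      split_ifs <;> ring
    have hj := Real.pow_arith_mean_le_arith_mean_pow univ μB q (fun B _ => hB0 B) hB1
      (fun B _ => hq0 B) ℓ
    refine (pow_le_pow_left₀ hε0.le hm ℓ).trans (hj.trans_eq ?_)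
    have hq : ∀ B, q B ^ ℓ = ∑ p, if Disjoint (U p) B then w p else 0 := by
      intro B
      simp only [q, U, w, Finset.disjoint_biUnion_left, Finset.mem_univ, true_imp_iff]
      exact (sum_prod_forall ℓ μA (fun A => Disjoint A B)).symm
    simp only [hq, b, Finset.mul_sum]
    rw [Finset.sum_comm]
    refine Finset.sum_congr rfl fun p _ => Finset.sum_congr rfl fun B _ => ?_
    split_ifs <;> ring
  have hpt : ∀ S, b S ≤ ε ^ ℓ / 2 + ∑ T with a T < δ, if S ⊆ T then (1 : ℝ) else 0 := by
    intro S
    have hnn : ∀ T ∈ univ.filter (a · < δ), (0 : ℝ) ≤ if S ⊆ T then (1 : ℝ) else 0 := by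
      intro T _
      split_ifs <;> norm_num
    rcases lt_or_ge (a S) δ with h | h
    · have h1 := Finset.single_le_sum hnn (Finset.mem_filter.2 ⟨Finset.mem_univ S, h⟩)
      rw [if_pos (Finset.Subset.refl S)] at h1
      have := hb1 S
      have : 0 < ε ^ ℓ := by positivity
      linarith
    · have := hbad S h
      have := Finset.sum_nonneg hnn
      linarith
  have hup : ∑ p, w p * b (U p) ≤ ε ^ ℓ / 2 + 2 ^ n * δ ^ ℓ := by
    calc ∑ p, w p * b (U p)
        ≤ ∑ p, w p * (ε ^ ℓ / 2 + ∑ T with a T < δ, if U p ⊆ T then (1 : ℝ) else 0) :=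
          Finset.sum_le_sum fun p _ => mul_le_mul_of_nonneg_left (hpt _) (hw0 p)
      _ = ε ^ ℓ / 2 + ∑ T with a T < δ, a T ^ ℓ := by
          simp only [mul_add, Finset.sum_add_distrib]
          rw [← Finset.sum_mul, hw1, one_mul]
          simp only [Finset.mul_sum]
          rw [Finset.sum_comm]
          congr 1
          refine Finset.sum_congr rfl fun T _ => ?_
          simp only [a]
          rw [← sum_prod_forall ℓ μA (fun A => A ⊆ T)]
          refine Finset.sum_congr rfl fun p _ => ?_
          simp only [U, w, Finset.biUnion_subset, Finset.mem_univ, true_imp_iff, mul_ite, mul_one,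
            mul_zero]
      _ ≤ ε ^ ℓ / 2 + ∑ T : Finset (Fin n), δ ^ ℓ := by
          gcongr
          rw [Finset.sum_filter]
          refine Finset.sum_le_sum fun T _ => ?_
          split_ifs with h
          · exact pow_le_pow_left₀ (ha0 T) h.le ℓ
          · positivity
      _ = ε ^ ℓ / 2 + 2 ^ n * δ ^ ℓ := by simp
  linarith
end

section
/- Let n and ℓ be positive integers and let μ_A be a probability distribution on the power set 2^[n]. Sample sets A₁, …, A_ℓ independently, each according to μ_A, and set U = A₁ ∪ ⋯ ∪ A_ℓ. Then with probability at least 1 − 2^{-2n} (over the choice of A₁, …, A_ℓ), the family 𝒜 = {A ⊆ [n] : A ⊆ U} satisfies μ_A(𝒜) ≥ 2^{-3n/ℓ}. -/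
/-! Union bound over the possible values of `U = A₁ ∪ ⋯ ∪ A_ℓ`. Write `f U` for the measure of the
family of subsets of `U`, and `q = 2^{-3n/ℓ}`. If the union equals `U`, then every sample is a subset
of `U`, which has probability `f U ^ ℓ`. For each `U` with `f U < q` this is at most
`q ^ ℓ = 2^{-3n}`, and there are at most `2^n` such `U`, so the bad event has probability at most
`2^{-2n}`. -/

open Finset Classical

/-- A fixed `U` whose family of subsets has measure at most `q` is the union of the samples with
probability at most `q ^ ℓ`. -/
lemma sum_prod_sup_eq_le {n ℓ : ℕ} (μA : Finset (Fin n) → ℝ) (hA0 : ∀ A, 0 ≤ μA A)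
    (U : Finset (Fin n)) (q : ℝ)
    (hU : ∑ A ∈ Finset.univ.filter (fun A => A ⊆ U), μA A ≤ q) :
    ∑ T ∈ Finset.univ.filter (fun T : Fin ℓ → Finset (Fin n) => Finset.univ.sup T = U),
      ∏ i, μA (T i) ≤ q ^ ℓ := by
  calc _ ≤ ∑ T ∈ Fintype.piFinset
            (fun _ : Fin ℓ => Finset.univ.filter (fun A : Finset (Fin n) => A ⊆ U)),
            ∏ i, μA (T i) := by
        refine Finset.sum_le_sum_of_subset_of_nonneg ?_
          fun T _ _ => Finset.prod_nonneg fun i _ => hA0 _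
        intro T hT
        simp only [Finset.mem_filter, Finset.mem_univ, true_and, Fintype.mem_piFinset] at hT ⊢
        intro i
        exact hT ▸ Finset.le_sup (f := T) (Finset.mem_univ i)
    _ = (∑ A ∈ Finset.univ.filter (fun A => A ⊆ U), μA A) ^ ℓ := by
        rw [← Finset.prod_univ_sum]
        simp
    _ ≤ q ^ ℓ := pow_le_pow_left₀ (Finset.sum_nonneg fun A _ => hA0 A) hU ℓ

/-- with probability at least `1 - 2^{-2n}` over `ℓ` independent samples
`A₁, …, A_ℓ ∼ μA`, the family of sets contained in `U = A₁ ∪ ⋯ ∪ A_ℓ` has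
`μA`-measure at least `2^{-3n/ℓ}`. -/
theorem statement2 (n ℓ : ℕ) (hn : 0 < n) (hℓ : 0 < ℓ)
    (μA : Finset (Fin n) → ℝ)
    (hA0 : ∀ A, 0 ≤ μA A) (hA1 : (∑ A, μA A) = 1) :
    1 - (2 : ℝ) ^ (-(2 * (n : ℝ))) ≤
      ∑ T ∈ Finset.univ.filter
          (fun T : Fin ℓ → Finset (Fin n) =>
            (2 : ℝ) ^ (-(3 * (n : ℝ) / (ℓ : ℝ))) ≤
              ∑ A ∈ Finset.univ.filter (fun A => A ⊆ Finset.univ.sup T), μA A),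
        ∏ i, μA (T i) := by
  set q : ℝ := (2 : ℝ) ^ (-(3 * (n : ℝ) / (ℓ : ℝ))) with hq
  set f : Finset (Fin n) → ℝ :=
    fun U => ∑ A ∈ Finset.univ.filter (fun A => A ⊆ U), μA A with hf
  have hq0 : 0 ≤ q := by positivity
  have hqℓ : q ^ ℓ = (2 : ℝ) ^ (-(3 * (n : ℝ))) := by
    rw [hq, ← Real.rpow_natCast, ← Real.rpow_mul (by norm_num)]
    congr 1
    have : (ℓ : ℝ) ≠ 0 := by positivity
    field_simp
  have htot : ∑ T : Fin ℓ → Finset (Fin n), ∏ i, μA (T i) = 1 := by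
    rw [← Fintype.piFinset_univ, ← Finset.prod_univ_sum]
    simp [hA1]
  have hbad : ∑ T ∈ Finset.univ.filter
      (fun T : Fin ℓ → Finset (Fin n) => ¬ q ≤ f (Finset.univ.sup T)),
      ∏ i, μA (T i) ≤ (2 : ℝ) ^ (-(2 * (n : ℝ))) := by
    rw [← Finset.sum_fiberwise _ (fun T : Fin ℓ → Finset (Fin n) => Finset.univ.sup T)]
    calc _ ≤ ∑ _U : Finset (Fin n), q ^ ℓ := by
          refine Finset.sum_le_sum fun U _ => ?_
          by_cases hU : q ≤ f U
          · -- The fibre over such a `U` contains no bad tuple.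
            rw [Finset.sum_eq_zero]
            · positivity
            · intro T hT
              simp only [Finset.mem_filter, Finset.mem_univ, true_and] at hT
              exact absurd (hT.2 ▸ hU) hT.1
          · refine le_trans ?_ (sum_prod_sup_eq_le (ℓ := ℓ) μA hA0 U q (not_le.mp hU).le)
            refine Finset.sum_le_sum_of_subset_of_nonneg ?_
              fun T _ _ => Finset.prod_nonneg fun i _ => hA0 _
            exact Finset.filter_subset_filter _ (Finset.filter_subset _ _)
      _ = (2 : ℝ) ^ (-(2 * (n : ℝ))) := by
          rw [hqℓ, Finset.sum_const, Finset.card_univ, Fintype.card_finset, Fintype.card_fin,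
            nsmul_eq_mul, Nat.cast_pow, Nat.cast_ofNat, ← Real.rpow_natCast,
            ← Real.rpow_add (by norm_num)]
          congr 1
          ring
  have hsplit := Finset.sum_filter_add_sum_filter_not Finset.univ
    (fun T : Fin ℓ → Finset (Fin n) => q ≤ f (Finset.univ.sup T)) (fun T => ∏ i, μA (T i))
  rw [htot] at hsplit
  linarith
end

section
/- Let n and ℓ be positive integers, let μ_A and μ_B be probability distributions on the power set 2^[n], and let ε ∈ (0, 1) satisfy P_{A∼μ_A, B∼μ_B}[A ∩ B = ∅] ≥ ε (the sets A and B are sampled independently). Sample sets A₁, …, A_ℓ independently, each according to μ_A, and set U = A₁ ∪ ⋯ ∪ A_ℓ. Then P[ μ_B({B ⊆ [n] : B ∩ U = ∅}) ≥ ε^ℓ/2 ] > ε^ℓ/2, where the probability is over the choice of A₁, …, A_ℓ. -/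
open Finset Classical

/-!
Let `p B` be the probability that `A ∼ μA` is disjoint from `B`, and `g T` the `μB`-measure of the
sets disjoint from `U = A₁ ∪ ⋯ ∪ A_ℓ`, where `T = (A₁, …, A_ℓ)`. For a fixed `B`, independence gives
`P[B ∩ U = ∅] = p B ^ ℓ`, so exchanging the sums and applying the power mean inequality yields
`E[g] = E_B[p B ^ ℓ] ≥ (E_B[p B]) ^ ℓ ≥ ε ^ ℓ` (`pow_le_expectation`). Since `g ≤ 1`, a reverse
Markov estimate (`half_lt_prob`) finishes: with `c = ε ^ ℓ / 2` and `P` the probability of `c ≤ g`,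
`2 c ≤ E[g] ≤ P + c (1 - P)`, which forces `P > c`.
-/

/-- Reverse Markov inequality: a function bounded by `1` whose mean under the weights `w` is at
least `2 * c > 0` is at least `c` with probability more than `c`. -/
lemma half_lt_prob {α : Type*} [Fintype α] (w g : α → ℝ) (c : ℝ) (hc : 0 < c)
    (hw : ∀ a, 0 ≤ w a) (hw1 : ∑ a, w a = 1) (hg : ∀ a, g a ≤ 1)
    (h : 2 * c ≤ ∑ a, w a * g a) :
    c < ∑ a ∈ univ.filter (fun a => c ≤ g a), w a := by
  have hsplit := sum_filter_add_sum_filter_not univ (fun a => c ≤ g a) (fun a => w a * g a)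
  have hsplit1 := sum_filter_add_sum_filter_not univ (fun a => c ≤ g a) w
  have hgood : ∑ a ∈ univ.filter (fun a => c ≤ g a), w a * g a
      ≤ ∑ a ∈ univ.filter (fun a => c ≤ g a), w a :=
    sum_le_sum fun a _ => mul_le_of_le_one_right (hw a) (hg a)
  have hbad : ∑ a ∈ univ.filter (fun a => ¬ c ≤ g a), w a * g a
      ≤ (∑ a ∈ univ.filter (fun a => ¬ c ≤ g a), w a) * c := by
    rw [sum_mul]
    refine sum_le_sum fun a ha => mul_le_mul_of_nonneg_left ?_ (hw a)
    exact (not_le.mp (mem_filter.mp ha).2).le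
  have hP0 : 0 ≤ ∑ a ∈ univ.filter (fun a => c ≤ g a), w a := sum_nonneg fun a _ => hw a
  rw [hw1] at hsplit1
  generalize ∑ a ∈ univ.filter (fun a => c ≤ g a), w a = P at *
  obtain rfl | hP := hP0.eq_or_lt
  · nlinarith
  · nlinarith [mul_pos hP hc]

/-- The expected `μB`-measure of the sets disjoint from `A₁ ∪ ⋯ ∪ A_ℓ` is at least `ε ^ ℓ`. -/
lemma pow_le_expectation {n ℓ : ℕ} (μA μB : Finset (Fin n) → ℝ)
    (hA0 : ∀ A, 0 ≤ μA A) (hB0 : ∀ B, 0 ≤ μB B) (hB1 : (∑ B, μB B) = 1)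
    (ε : ℝ) (hε0 : 0 < ε)
    (hP : ε ≤ ∑ A, ∑ B, (if Disjoint A B then μA A * μB B else 0)) :
    ε ^ ℓ ≤ ∑ T : Fin ℓ → Finset (Fin n), (∏ i, μA (T i)) *
      ∑ B ∈ univ.filter (fun B => Disjoint B (univ.sup T)), μB B := by
  have hmean : ∑ A, ∑ B, (if Disjoint A B then μA A * μB B else 0)
      = ∑ B, μB B * ∑ A, (if Disjoint A B then μA A else 0) := by
    rw [sum_comm]
    refine sum_congr rfl fun B _ => ?_
    rw [mul_sum]
    refine sum_congr rfl fun A _ => ?_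
    split_ifs <;> ring
  have hexp : ∑ T : Fin ℓ → Finset (Fin n), (∏ i, μA (T i)) *
        ∑ B ∈ univ.filter (fun B => Disjoint B (univ.sup T)), μB B
      = ∑ B, μB B * (∑ A, (if Disjoint A B then μA A else 0)) ^ ℓ := by
    simp_rw [Fintype.sum_pow, mul_sum]
    rw [sum_comm]
    refine sum_congr rfl fun T _ => ?_
    rw [sum_filter]
    refine sum_congr rfl fun B _ => ?_
    have hdisj : Disjoint B (univ.sup T) ↔ ∀ i, Disjoint (T i) B := by
      simp [Finset.disjoint_sup_right, disjoint_comm]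
    by_cases hB : ∀ i, Disjoint (T i) B
    · simp [hdisj, hB, mul_comm]
    · obtain ⟨i, hi⟩ := not_forall.mp hB
      rw [if_neg (mt hdisj.mp hB), prod_eq_zero (mem_univ i) (if_neg hi), mul_zero]
  rw [hexp]
  rw [hmean] at hP
  refine (pow_le_pow_left₀ hε0.le hP ℓ).trans ?_
  refine Real.pow_arith_mean_le_arith_mean_pow _ _ _ (fun B _ => hB0 B) hB1 (fun B _ => ?_) ℓ
  exact sum_nonneg fun A _ => by split_ifs <;> simp [hA0]

/-- with probability greater than `ε^ℓ/2` over the samples `A₁,…,A_ℓ ∼ μA`,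
the family `{B : B ∩ U = ∅}` (where `U = A₁ ∪ ⋯ ∪ A_ℓ`) has `μB`-measure at least `ε^ℓ/2`. -/
theorem statement4 (n ℓ : ℕ) (hn : 0 < n) (hℓ : 0 < ℓ)
    (μA μB : Finset (Fin n) → ℝ)
    (hA0 : ∀ A, 0 ≤ μA A) (hA1 : (∑ A, μA A) = 1)
    (hB0 : ∀ B, 0 ≤ μB B) (hB1 : (∑ B, μB B) = 1)
    (ε : ℝ) (hε0 : 0 < ε) (hε1 : ε < 1)
    (hP : ε ≤ ∑ A, ∑ B, (if Disjoint A B then μA A * μB B else 0)) :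
    ε ^ ℓ / 2 <
      ∑ T ∈ Finset.univ.filter
          (fun T : Fin ℓ → Finset (Fin n) =>
            ε ^ ℓ / 2 ≤
              ∑ B ∈ Finset.univ.filter (fun B => Disjoint B (Finset.univ.sup T)), μB B),
        ∏ i, μA (T i) := by
  refine half_lt_prob (fun T : Fin ℓ → Finset (Fin n) => ∏ i, μA (T i))
    (fun T => ∑ B ∈ univ.filter (fun B => Disjoint B (univ.sup T)), μB B) _ (by positivity)
    (fun T => prod_nonneg fun i _ => hA0 _) ?_ (fun T => ?_) ?_
  · rw [← Fintype.sum_pow, hA1, one_pow]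
  · rw [← hB1]
    exact sum_le_sum_of_subset_of_nonneg (subset_univ _) fun B _ _ => hB0 B
  · rw [mul_div_cancel₀ _ two_ne_zero]
    exact pow_le_expectation μA μB hA0 hB0 hB1 ε hε0 hP
end

section
/- (Classical Substate theorem of Jain, Radhakrishnan, and Sen.) Let ε > 0, let 𝒜 and ℬ be finite sets, and let μ be a probability distribution on 𝒜 × ℬ with marginals μ_A, μ_B whose mutual information I(A:B) = Σ_{a∈𝒜} Σ_{b∈ℬ} μ(a,b) · log₂( μ(a,b) / (μ_A(a)·μ_B(b)) ) is at most k. Then there exists a probability distribution ν on 𝒜 × ℬ, with marginals ν_A and ν_B, such that ‖μ − ν‖_TV ≤ ε and ν(a,b) ≤ 2^{4(k+1)/ε} · ν_A(a) · ν_B(b) for every (a, b) ∈ 𝒜 × ℬ (i.e., I_∞(ν) ≤ 4(k+1)/ε). -/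
/-!
Let `q = μ_A ⊗ μ_B`. The substate `ν` is built so that it keeps both marginals of `μ`: a part
`0 ≤ u ≤ μ` of mass `m` is cut out of `μ` and replaced by the product `u_A ⊗ u_B / m`, which has the
same marginals as `u` (`exists_substate_of_le`). This moves mass at most `m`, and the new part is at
most `q / m`, since `u_A ≤ μ_A` and `u_B ≤ μ_B`.

The part to cut out is essentially the set where `μ > 2 ^ c * q`, with `c = 2 (k + 1) / ε`. Since
`μ log₂ (μ / q) ≥ -q` pointwise (`neg_le_mul_logb`), a Markov argument shows that this set has mass
`d` with `c * d ≤ k + 1`, so `d ≤ ε / 2`. To keep `1 / m` under control when `d` is tiny, an `ε / 2`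
fraction of the rest of `μ` is cut out as well. Then `ε / 2 ≤ m ≤ ε` and
`ν ≤ (2 ^ c + 2 / ε) * q ≤ 2 ^ (2 * c) * q`. For `ε ≥ 1` one cuts out all of `μ`, so that `ν = q`,
and the bound only needs `k ≥ 0`, the nonnegativity of mutual information.
-/

open Finset Classical

/-- The negative part of `x log₂ (x / q)` is at most `q`; this is the source of the `+ 1` in the
exponent. -/
lemma neg_le_mul_logb {x q : ℝ} (hx : 0 < x) (hq : 0 < q) : -q ≤ x * Real.logb 2 (x / q) := by
  have hl : 1 / 2 < Real.log 2 := by linarith [Real.log_two_gt_d9]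
  have hl1 : Real.log 2 < 1 := by linarith [Real.log_two_lt_d9]
  -- The factor `2` inside the logarithm improves the constant `1 / log 2 > 1` that the plain
  -- inequality `log y ≤ y - 1` would give.
  have h := Real.log_le_sub_one_of_pos (show 0 < q / (2 * x) by positivity)
  have e : Real.log (q / (2 * x)) = -Real.log (x / q) - Real.log 2 := by
    rw [Real.log_div hq.ne' (by positivity), Real.log_mul two_ne_zero hx.ne',
      Real.log_div hx.ne' hq.ne']
    ring
  rw [e] at h
  have h2 := mul_le_mul_of_nonneg_left h hx.le
  have e2 : x * (q / (2 * x) - 1) = q / 2 - x := by field_simp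
  rw [e2] at h2
  rw [Real.logb, ← mul_div_assoc, le_div_iff₀ (by linarith)]
  nlinarith

lemma sub_div_log_two_le_mul_logb {x q : ℝ} (hx : 0 < x) (hq : 0 < q) :
    (x - q) / Real.log 2 ≤ x * Real.logb 2 (x / q) := by
  have h := Real.log_le_sub_one_of_pos (show 0 < q / x by positivity)
  have e : Real.log (q / x) = -Real.log (x / q) := by
    rw [Real.log_div hq.ne' hx.ne', Real.log_div hx.ne' hq.ne']
    ring
  rw [e] at h
  have h2 := mul_le_mul_of_nonneg_left h hx.le
  have e2 : x * (q / x - 1) = q - x := by field_simp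
  rw [e2] at h2
  rw [Real.logb, ← mul_div_assoc]
  exact div_le_div_of_nonneg_right (by linarith) (Real.log_nonneg (by norm_num))

/-- Replacing a part `u` of `μ` by the normalized product of its marginals keeps the marginals of
`μ` and moves mass at most `∑ p, u p`. -/
lemma exists_substate_of_le {𝒜 ℬ : Type*} [Fintype 𝒜] [Fintype ℬ] (ε K : ℝ)
    (μ u : 𝒜 × ℬ → ℝ) (h1 : (∑ p, μ p) = 1)
    (hu0 : ∀ p, 0 ≤ u p) (huμ : ∀ p, u p ≤ μ p) (hm0 : 0 < ∑ p, u p) (hmε : (∑ p, u p) ≤ ε)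
    (hK : ∀ a b, μ (a, b) - u (a, b) +
        (∑ b', μ (a, b')) * (∑ a', μ (a', b)) / (∑ p, u p) ≤
      K * ((∑ b', μ (a, b')) * (∑ a', μ (a', b)))) :
    ∃ ν : 𝒜 × ℬ → ℝ, (∀ p, 0 ≤ ν p) ∧ (∑ p, ν p) = 1 ∧
      (∀ S : Finset (𝒜 × ℬ), |(∑ p ∈ S, μ p) - ∑ p ∈ S, ν p| ≤ ε) ∧
      (∀ a b, ν (a, b) ≤ K * (∑ b', ν (a, b')) * (∑ a', ν (a', b))) := by
  set m := ∑ p, u p with hm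
  have hmA : ∑ a, ∑ b, u (a, b) = m := by rw [hm, Fintype.sum_prod_type]
  have hmB : ∑ b, ∑ a, u (a, b) = m := by rw [hm, Fintype.sum_prod_type_right]
  let v : 𝒜 × ℬ → ℝ := fun p => (∑ b', u (p.1, b')) * (∑ a', u (a', p.2)) / m
  have hv0 : ∀ p, 0 ≤ v p := fun p => div_nonneg
    (mul_nonneg (sum_nonneg fun _ _ => hu0 _) (sum_nonneg fun _ _ => hu0 _)) hm0.le
  have hvA : ∀ a, ∑ b, v (a, b) = ∑ b, u (a, b) := fun a => by
    simp only [v]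
    rw [← sum_div, ← mul_sum, hmB, mul_div_cancel_right₀ _ hm0.ne']
  have hvB : ∀ b, ∑ a, v (a, b) = ∑ a, u (a, b) := fun b => by
    simp only [v]
    rw [← sum_div, ← sum_mul, hmA, mul_div_cancel_left₀ _ hm0.ne']
  have hvm : ∑ p, v p = m := by
    rw [Fintype.sum_prod_type, ← hmA]
    exact sum_congr rfl fun a _ => hvA a
  refine ⟨fun p => μ p - u p + v p, fun p => ?_, ?_, fun S => ?_, fun a b => ?_⟩
  · linarith [huμ p, hv0 p]
  · rw [sum_add_distrib, sum_sub_distrib, h1, hvm]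
    ring
  · have hu : ∑ p ∈ S, u p ≤ m := sum_le_univ_sum_of_nonneg hu0
    have hv : ∑ p ∈ S, v p ≤ m := hvm ▸ sum_le_univ_sum_of_nonneg hv0
    have hu' : 0 ≤ ∑ p ∈ S, u p := sum_nonneg fun _ _ => hu0 _
    have hv' : 0 ≤ ∑ p ∈ S, v p := sum_nonneg fun _ _ => hv0 _
    rw [sum_add_distrib, sum_sub_distrib, abs_le]
    constructor <;> linarith
  · have eA : ∑ b', (μ (a, b') - u (a, b') + v (a, b')) = ∑ b', μ (a, b') := by
      rw [sum_add_distrib, sum_sub_distrib, hvA]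
      ring
    have eB : ∑ a', (μ (a', b) - u (a', b) + v (a', b)) = ∑ a', μ (a', b) := by
      rw [sum_add_distrib, sum_sub_distrib, hvB]
      ring
    have hv : v (a, b) ≤ (∑ b', μ (a, b')) * (∑ a', μ (a', b)) / m :=
      div_le_div_of_nonneg_right (mul_le_mul (sum_le_sum fun _ _ => huμ _)
        (sum_le_sum fun _ _ => huμ _) (sum_nonneg fun _ _ => hu0 _)
        (sum_nonneg fun _ _ => (hu0 _).trans (huμ _))) hm0.le
    simp only [eA, eB]
    rw [mul_assoc]
    linarith [hK a b]

/-- classical Substate theorem of Jain–Radhakrishnan–Sen: if the mutual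
information of `μ` is at most `k`, then there is a distribution `ν` with
`‖μ − ν‖_TV ≤ ε` and `ν(a,b) ≤ 2^{4(k+1)/ε} · ν_A(a) · ν_B(b)` for all `(a,b)`. -/
theorem statement9 {𝒜 ℬ : Type*} [Fintype 𝒜] [Fintype ℬ]
    (ε : ℝ) (hε : 0 < ε) (k : ℝ)
    (μ : 𝒜 × ℬ → ℝ) (h0 : ∀ p, 0 ≤ μ p) (h1 : (∑ p, μ p) = 1)
    (hMI : ∑ a, ∑ b,
        (if μ (a, b) = 0 then 0 else
          μ (a, b) * Real.logb 2 (μ (a, b) / ((∑ b', μ (a, b')) * (∑ a', μ (a', b)))))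
      ≤ k) :
    ∃ ν : 𝒜 × ℬ → ℝ, (∀ p, 0 ≤ ν p) ∧ (∑ p, ν p) = 1 ∧
      (∀ S : Finset (𝒜 × ℬ), |(∑ p ∈ S, μ p) - ∑ p ∈ S, ν p| ≤ ε) ∧
      (∀ a b, ν (a, b) ≤
        (2 : ℝ) ^ (4 * (k + 1) / ε) * (∑ b', ν (a, b')) * (∑ a', ν (a', b))) := by
  set q : 𝒜 × ℬ → ℝ := fun p => (∑ b', μ (p.1, b')) * (∑ a', μ (a', p.2)) with hq
  have hA : ∀ a b, μ (a, b) ≤ ∑ b', μ (a, b') := fun a b =>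
    single_le_sum (f := fun b' => μ (a, b')) (fun _ _ => h0 _) (mem_univ b)
  have hB : ∀ a b, μ (a, b) ≤ ∑ a', μ (a', b) := fun a b =>
    single_le_sum (f := fun a' => μ (a', b)) (fun _ _ => h0 _) (mem_univ a)
  have hq0 : ∀ p, 0 ≤ q p := fun p =>
    mul_nonneg (sum_nonneg fun _ _ => h0 _) (sum_nonneg fun _ _ => h0 _)
  have hqpos : ∀ p, 0 < μ p → 0 < q p := fun p hp =>
    mul_pos (hp.trans_le (hA p.1 p.2)) (hp.trans_le (hB p.1 p.2))
  have hq1 : ∑ p, q p = 1 := by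
    rw [Fintype.sum_prod_type]
    simp only [hq]
    rw [← sum_mul_sum, ← Fintype.sum_prod_type, ← Fintype.sum_prod_type_right (f := μ), h1, one_mul]
  set t : 𝒜 × ℬ → ℝ := fun p => if μ p = 0 then 0 else μ p * Real.logb 2 (μ p / q p) with ht
  have hI : ∑ p, t p ≤ k := by
    rw [Fintype.sum_prod_type]
    exact hMI
  have hk : 0 ≤ k := by
    have h : ∑ p, (μ p - q p) / Real.log 2 ≤ ∑ p, t p := by
      refine sum_le_sum fun p _ => ?_
      by_cases hp : μ p = 0
      · simp only [ht, hp, if_true]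
        exact div_nonpos_of_nonpos_of_nonneg (by linarith [hq0 p]) (Real.log_nonneg (by norm_num))
      · have hp' := lt_of_le_of_ne (h0 p) (Ne.symm hp)
        simp only [ht, hp, if_false]
        exact sub_div_log_two_le_mul_logb hp' (hqpos p hp')
    rw [← sum_div, sum_sub_distrib, h1, hq1, sub_self, zero_div] at h
    exact h.trans hI
  rcases le_or_gt 1 ε with hε1 | hε1
  · refine exists_substate_of_le ε _ μ μ h1 h0 (fun _ => le_rfl) (by rw [h1]; norm_num)
      (by rw [h1]; exact hε1) fun a b => ?_
    rw [h1, sub_self, zero_add, div_one]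
    exact le_mul_of_one_le_left (hq0 (a, b)) (Real.one_le_rpow (by norm_num) (by positivity))
  · set c := 2 * (k + 1) / ε with hc
    have hc2 : 2 / ε ≤ c := by
      rw [hc]
      exact div_le_div_of_nonneg_right (by linarith) hε.le
    have hc1 : 1 ≤ c := le_trans (by rw [le_div_iff₀ hε]; linarith) hc2
    -- The part of `μ` where the likelihood ratio `μ / q` exceeds `2 ^ c`.
    set δ : 𝒜 × ℬ → ℝ := fun p => if (2 : ℝ) ^ c * q p < μ p then μ p else 0 with hδ
    have hδ0 : ∀ p, 0 ≤ δ p := fun p => by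
      simp only [hδ]
      split_ifs
      exacts [h0 p, le_rfl]
    have hδμ : ∀ p, δ p ≤ μ p := fun p => by
      simp only [hδ]
      split_ifs
      exacts [le_rfl, h0 p]
    have hd : ∑ p, δ p ≤ ε / 2 := by
      have h : ∑ p, c * δ p ≤ ∑ p, (t p + q p) := by
        refine sum_le_sum fun p _ => ?_
        by_cases hp : μ p = 0
        · have : δ p = 0 := le_antisymm (hp ▸ hδμ p) (hδ0 p)
          rw [this]
          simp only [ht, hp, if_true]
          linarith [hq0 p]
        · have hp' := lt_of_le_of_ne (h0 p) (Ne.symm hp)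
          have hqp := hqpos p hp'
          simp only [ht, hp, if_false, hδ]
          split_ifs with hbad
          · have : c ≤ Real.logb 2 (μ p / q p) := by
              rw [Real.le_logb_iff_rpow_le (by norm_num) (by positivity), le_div_iff₀ hqp]
              exact hbad.le
            nlinarith
          · linarith [neg_le_mul_logb hp' hqp]
      rw [← mul_sum, sum_add_distrib, hq1] at h
      have h' : c * ∑ p, δ p ≤ c * (ε / 2) := by
        have : c * (ε / 2) = k + 1 := by rw [hc]; field_simp
        linarith
      exact le_of_mul_le_mul_left h' (by linarith)
    have hs0 : 0 ≤ ∑ p, δ p := sum_nonneg fun _ _ => hδ0 _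
    have hu : ∑ p, ((1 - ε / 2) * δ p + ε / 2 * μ p) = (1 - ε / 2) * ∑ p, δ p + ε / 2 := by
      rw [sum_add_distrib, ← mul_sum, ← mul_sum, h1, mul_one]
    have hm : ε / 2 ≤ (1 - ε / 2) * ∑ p, δ p + ε / 2 := by nlinarith
    refine exists_substate_of_le ε _ μ (fun p => (1 - ε / 2) * δ p + ε / 2 * μ p) h1
      (fun p => ?_) (fun p => ?_) ?_ ?_ fun a b => ?_
    · nlinarith [hδ0 p, h0 p]
    · nlinarith [hδμ p, h0 p]
    · rw [hu]
      linarith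
    · rw [hu]
      nlinarith
    · rw [hu]
      change _ + q (a, b) / _ ≤ _ * q (a, b)
      have hqab := hq0 (a, b)
      have hpow : (0 : ℝ) < 2 ^ c := by positivity
      have hgood : μ (a, b) - δ (a, b) ≤ (2 : ℝ) ^ c * q (a, b) := by
        simp only [hδ]
        split_ifs with h
        · rw [sub_self]
          positivity
        · linarith
      have hfirst : μ (a, b) - ((1 - ε / 2) * δ (a, b) + ε / 2 * μ (a, b)) ≤
          (2 : ℝ) ^ c * q (a, b) := by
        nlinarith [hδμ (a, b)]
      have hsecond : q (a, b) / ((1 - ε / 2) * ∑ p, δ p + ε / 2) ≤ 2 / ε * q (a, b) :=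
        calc _ ≤ q (a, b) / (ε / 2) := div_le_div_of_nonneg_left hqab (by linarith) hm
          _ = _ := by field_simp
      have h2c : (2 : ℝ) ≤ 2 ^ c := by
        simpa using Real.rpow_le_rpow_of_exponent_le (x := 2) (by norm_num) hc1
      -- Bernoulli's inequality gives `c ≤ 2 ^ c`.
      have hcc : c ≤ (2 : ℝ) ^ c := by
        have := one_add_mul_self_le_rpow_one_add (s := 1) (by norm_num) hc1
        norm_num at this
        linarith
      have hexp : (2 : ℝ) ^ (4 * (k + 1) / ε) = 2 ^ c * 2 ^ c := by
        rw [← Real.rpow_add (by norm_num), hc]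
        congr 1
        ring
      have hK : (2 : ℝ) ^ c + 2 / ε ≤ 2 ^ c * 2 ^ c := by nlinarith
      rw [hexp]
      nlinarith [mul_le_mul_of_nonneg_right hK hqab]
end

section
/- There exists a universal constant C > 0 such that the following holds for every positive integer n. Let 𝒜 and ℬ be nonempty families of subsets of [n] = {1,…,n}, and let ε be a real number with 2^{-n} < ε < 1/2 such that the number of pairs (A, B) ∈ 𝒜 × ℬ with A ∩ B = ∅ is at least ε·|𝒜|·|ℬ|. Then there exist subfamilies ℱ ⊆ 𝒜 and 𝒢 ⊆ ℬ with |ℱ|·|𝒢| ≥ 2^{-C·√(n·log₂(1/ε))}·|𝒜|·|ℬ| such that F ∩ G = ∅ for every pair (F, G) ∈ ℱ × 𝒢. -/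
/-!
Write `L = log₂ (1/ε)`.

*One-sided cleaning* (`exists_union`). Draw `B₁, …, B_k ∈ ℬ` uniformly at random and let `U` be
their union. Keep the `A ∈ 𝒜` disjoint from `U`, and the `B ∈ ℬ` with `|B \ U| ≤ 2n/(k+1)`.
For fixed `A`, a tuple `B₁, …, B_{k+1}` of sets disjoint from `A` has
`∑ⱼ |Bⱼ \ ⋃_{i ≠ j} Bᵢ| ≤ n`, so by Markov at least half of the indices `j` are good; averaging
over `j` shows that at least half of the tuples have a good last entry (`half_le_sum_good`).
Convexity in the degrees of the `A`s then gives a choice of `U` for which the cleaned families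
still have disjointness density at least `ε/4`, and at least `ε^(k+1)/4 · |𝒜||ℬ|` disjoint pairs.

*Conclusion.* Clean once with `U` a union of members of `ℬ`, and once more with the roles exchanged
and `V` a union of members of `𝒜`. Now every `A` avoids `U`, every `B` avoids `V`, and `|A \ V|`,
`|B \ U|` are at most `2n/(k+1)`. For a random `R ⊆ [n]`, the families `{A : A \ V ⊆ R}` and
`{B : (B \ U) ∩ R = ∅}` are cross-disjoint, and each disjoint pair survives with probability
at least `2^(-4n/(k+1))` (`exists_split`). Taking `k = ⌊√(n/L)⌋` balances the two losses.
-/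

open Finset

/-- The number of disjoint pairs in `𝒜 × ℬ`, as a real number. -/
noncomputable def disjPairs {n : ℕ} (𝒜 ℬ : Finset (Finset (Fin n))) : ℝ :=
  (((𝒜 ×ˢ ℬ).filter (fun p => Disjoint p.1 p.2)).card : ℝ)

lemma disjPairs_eq_sum {n : ℕ} (𝒜 ℬ : Finset (Finset (Fin n))) :
    disjPairs 𝒜 ℬ = ∑ A ∈ 𝒜, ∑ B ∈ ℬ, if Disjoint A B then (1 : ℝ) else 0 := by
  rw [disjPairs, card_filter, sum_product]
  push_cast
  rfl

lemma disjPairs_comm {n : ℕ} (𝒜 ℬ : Finset (Finset (Fin n))) :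
    disjPairs 𝒜 ℬ = disjPairs ℬ 𝒜 := by
  rw [disjPairs_eq_sum, disjPairs_eq_sum, sum_comm]
  simp only [disjoint_comm]

lemma disjPairs_le {n : ℕ} (𝒜 ℬ : Finset (Finset (Fin n))) :
    disjPairs 𝒜 ℬ ≤ 𝒜.card * ℬ.card := by
  rw [disjPairs]
  exact_mod_cast (card_filter_le _ _).trans (card_product _ _).le

/-- The private parts of the members of a tuple of sets are pairwise disjoint. -/
lemma sum_private_le {n k : ℕ} (s : Fin (k + 1) → Finset (Fin n)) :
    ∑ j, (s j \ univ.biUnion (fun i => s (j.succAbove i))).card ≤ n := by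
  rw [← card_biUnion]
  · exact (card_le_univ _).trans (by simp)
  · intro i _ j _ hij
    refine Finset.disjoint_left.2 fun x hx hx' => ?_
    simp only [mem_sdiff, mem_biUnion, mem_univ, true_and, not_exists] at hx hx'
    obtain ⟨l, hl⟩ := Fin.exists_succAbove_eq hij
    exact hx'.2 l (hl ▸ hx.1)

lemma sum_prod_eq_pow {α : Type*} [Fintype α] (w : α → ℝ) (k : ℕ) :
    ∑ f : Fin k → α, ∏ i, w (f i) = (∑ a, w a) ^ k := by
  have := Finset.prod_univ_sum (fun _ : Fin k => (univ : Finset α)) (fun _ a => w a)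
  simpa using this.symm

/-- If `k + 1` sets are drawn independently with weights `w`, then with probability at least one
half the last one has at most `2n/(k+1)` elements outside the union of the others. -/
lemma half_le_sum_good {n k : ℕ} (hn : 0 < n) {α : Type*} [Fintype α]
    (s : α → Finset (Fin n)) (w : α → ℝ) (hw : ∀ a, 0 ≤ w a) :
    (∑ a, w a) ^ (k + 1) / 2 ≤ ∑ g : Fin k → α, ∑ b, (∏ i, w (g i)) * w b *
      (if (k + 1) * (s b \ univ.biUnion (fun i => s (g i))).card ≤ 2 * n then (1 : ℝ) else 0) := by
  set T := ∑ g : Fin k → α, ∑ b, (∏ i, w (g i)) * w b *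
    (if (k + 1) * (s b \ univ.biUnion (fun i => s (g i))).card ≤ 2 * n then (1 : ℝ) else 0) with hT
  -- By symmetry, the distinguished entry may be placed at any position `j`.
  have hj : ∀ j : Fin (k + 1), T = ∑ f : Fin (k + 1) → α, (∏ i, w (f i)) *
      (if (k + 1) * (s (f j) \ univ.biUnion (fun i => s (f (j.succAbove i)))).card ≤ 2 * n
        then (1 : ℝ) else 0) := by
    intro j
    rw [hT, sum_comm, ← Fintype.sum_prod_type', ← (Fin.insertNthEquiv (fun _ => α) j).sum_comp]
    refine sum_congr rfl fun p _ => ?_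
    rw [Fin.prod_univ_succAbove _ j]
    simp [Fin.insertNthEquiv, mul_comm]
  have hn' : (0 : ℝ) < n := by exact_mod_cast hn
  have hk : (0 : ℝ) < k + 1 := by positivity
  have key : ∀ f : Fin (k + 1) → α, ((k : ℝ) + 1) / 2 ≤ ∑ j : Fin (k + 1),
      (if (k + 1) * (s (f j) \ univ.biUnion (fun i => s (f (j.succAbove i)))).card ≤ 2 * n
        then (1 : ℝ) else 0) := by
    intro f
    have h1 := sum_private_le (fun i => s (f i))
    have h1' : ∑ j, ((s (f j) \ univ.biUnion (fun i => s (f (j.succAbove i)))).card : ℝ) ≤ n := by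
      exact_mod_cast h1
    calc ((k : ℝ) + 1) / 2 = (k + 1) - (k + 1) / (2 * n) * n := by field_simp; ring
      _ ≤ (k + 1) - (k + 1) / (2 * n) *
          ∑ j, ((s (f j) \ univ.biUnion (fun i => s (f (j.succAbove i)))).card : ℝ) := by gcongr
      _ = ∑ j : Fin (k + 1), (1 - ((k : ℝ) + 1) / (2 * n) *
          ((s (f j) \ univ.biUnion (fun i => s (f (j.succAbove i)))).card : ℝ)) := by
        rw [sum_sub_distrib, mul_sum]; simp
      _ ≤ _ := by
        refine sum_le_sum fun j _ => ?_
        split_ifs with h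
        · have : 0 ≤ ((k : ℝ) + 1) / (2 * n) *
            ((s (f j) \ univ.biUnion (fun i => s (f (j.succAbove i)))).card : ℝ) := by positivity
          linarith
        · push Not at h
          have h' : (2 * n : ℝ) < (k + 1) *
            ((s (f j) \ univ.biUnion (fun i => s (f (j.succAbove i)))).card : ℝ) := by
            exact_mod_cast h
          rw [sub_nonpos, div_mul_eq_mul_div, le_div_iff₀ (by positivity)]
          linarith
  have h2 : ((k : ℝ) + 1) * T = ∑ f : Fin (k + 1) → α, (∏ i, w (f i)) * ∑ j : Fin (k + 1),
      (if (k + 1) * (s (f j) \ univ.biUnion (fun i => s (f (j.succAbove i)))).card ≤ 2 * n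
        then (1 : ℝ) else 0) := by
    simp_rw [mul_sum]
    rw [sum_comm, ← sum_congr rfl (fun j _ => hj j)]
    simp
  have h3 : (∑ a, w a) ^ (k + 1) = ∑ f : Fin (k + 1) → α, ∏ i, w (f i) := by
    exact (sum_prod_eq_pow w (k + 1)).symm
  have h4 : (∑ a, w a) ^ (k + 1) * (((k : ℝ) + 1) / 2) ≤ (k + 1) * T := by
    rw [h2, h3, sum_mul]
    exact sum_le_sum fun f _ => mul_le_mul_of_nonneg_left (key f) (prod_nonneg fun i _ => hw _)
  have h5 : (k + 1) * ((∑ a, w a) ^ (k + 1) / 2) ≤ (k + 1) * T := by linarith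
  exact le_of_mul_le_mul_left h5 hk

/-- Power sums of a family with average at least `ε` grow by a factor of at least `ε`, by
Chebyshev's inequality `(t ^ k - ε ^ k) (t - ε) ≥ 0`. -/
lemma mul_sum_pow_le {ι : Type*} (s : Finset ι) (t : ι → ℝ) (ht : ∀ i ∈ s, 0 ≤ t i) (ε : ℝ)
    (hε : 0 ≤ ε) (h : ε * s.card ≤ ∑ i ∈ s, t i) (k : ℕ) :
    ε * ∑ i ∈ s, t i ^ k ≤ ∑ i ∈ s, t i ^ (k + 1) := by
  have h1 : 0 ≤ ∑ i ∈ s, ε ^ k * (t i - ε) := by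
    rw [← mul_sum, sum_sub_distrib]
    have : 0 ≤ ∑ i ∈ s, t i - ∑ i ∈ s, ε := by simp; linarith
    positivity
  have h2 : ∑ i ∈ s, ε ^ k * (t i - ε) ≤ ∑ i ∈ s, t i ^ k * (t i - ε) := by
    refine sum_le_sum fun i hi => ?_
    rcases le_total ε (t i) with h | h
    · exact mul_le_mul_of_nonneg_right (pow_le_pow_left₀ hε h k) (by linarith)
    · exact mul_le_mul_of_nonpos_right (pow_le_pow_left₀ (ht i hi) h k) (by linarith)
  have h3 : ∑ i ∈ s, t i ^ k * (t i - ε) = ∑ i ∈ s, t i ^ (k + 1) - ε * ∑ i ∈ s, t i ^ k := by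
    rw [mul_sum, ← sum_sub_distrib]
    exact sum_congr rfl fun i _ => by ring
  linarith

lemma pow_mul_card_le {ι : Type*} (s : Finset ι) (t : ι → ℝ) (ht : ∀ i ∈ s, 0 ≤ t i) (ε : ℝ)
    (hε : 0 ≤ ε) (h : ε * s.card ≤ ∑ i ∈ s, t i) (k : ℕ) :
    ε ^ k * s.card ≤ ∑ i ∈ s, t i ^ k := by
  induction k with
  | zero => simp
  | succ k ih =>
    calc ε ^ (k + 1) * s.card = ε * (ε ^ k * s.card) := by ring
      _ ≤ ε * ∑ i ∈ s, t i ^ k := by gcongr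
      _ ≤ _ := mul_sum_pow_le s t ht ε hε h k

/-- One-sided cleaning: some `U` (a union of `k` members of `ℬ`) is such that the `A ∈ 𝒜` avoiding
`U` and the `B ∈ ℬ` nearly contained in `U` still span many disjoint pairs, both relative to the
cleaned families and relative to the original ones. -/
lemma exists_union {n : ℕ} (hn : 0 < n) (k : ℕ) (𝒜 ℬ : Finset (Finset (Fin n)))
    (hℬ : ℬ.Nonempty) (ε : ℝ) (hε : 0 < ε)
    (h : ε * 𝒜.card * ℬ.card ≤ disjPairs 𝒜 ℬ) :
    ∃ U : Finset (Fin n), ∃ 𝒜' ⊆ 𝒜, ∃ ℬ' ⊆ ℬ,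
      (∀ A ∈ 𝒜', Disjoint A U) ∧ (∀ B ∈ ℬ', (k + 1) * (B \ U).card ≤ 2 * n) ∧
      ε / 4 * 𝒜'.card * ℬ'.card ≤ disjPairs 𝒜' ℬ' ∧
      ε ^ (k + 1) / 4 * 𝒜.card * ℬ.card ≤ disjPairs 𝒜' ℬ' := by
  classical
  set b : ℝ := (ℬ.card : ℝ) with hb
  have hb0 : 0 < b := by rw [hb]; exact_mod_cast hℬ.card_pos
  have : Nonempty ℬ := hℬ.to_subtype
  let w : Finset (Fin n) → ℬ → ℝ := fun A B => if Disjoint A B.1 then 1 else 0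
  have hw : ∀ A B, 0 ≤ w A B := fun A B => by simp only [w]; split_ifs <;> norm_num
  let d : Finset (Fin n) → ℝ := fun A => ∑ B, w A B
  have hd : ∀ A, 0 ≤ d A := fun A => sum_nonneg fun B _ => hw A B
  let t : Finset (Fin n) → ℝ := fun A => d A / b
  have ht : ∀ A ∈ 𝒜, 0 ≤ t A := fun A _ => div_nonneg (hd A) hb0.le
  have hdt : ∀ A, d A = b * t A := fun A => by simp only [t]; field_simp
  have hsum : ε * 𝒜.card ≤ ∑ A ∈ 𝒜, t A := by
    have h1 : disjPairs 𝒜 ℬ = ∑ A ∈ 𝒜, d A := by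
      rw [disjPairs_eq_sum]
      refine sum_congr rfl fun A _ => ?_
      exact (sum_coe_sort ℬ (fun B => if Disjoint A B then (1 : ℝ) else 0)).symm
    rw [h1] at h
    simp only [t]
    rw [← sum_div, le_div_iff₀ hb0]
    exact h
  let U : (Fin k → ℬ) → Finset (Fin n) := fun g => univ.biUnion (fun i => (g i).1)
  let P : (Fin k → ℬ) → Finset (Finset (Fin n)) := fun g => 𝒜.filter (fun A => Disjoint A (U g))
  let Q : (Fin k → ℬ) → Finset (Finset (Fin n)) :=
    fun g => ℬ.filter (fun B => (k + 1) * (B \ U g).card ≤ 2 * n)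
  have hprod : ∀ A g, ∏ i, w A (g i) = if Disjoint A (U g) then 1 else 0 := by
    intro A g
    simp only [w, U, disjoint_biUnion_right, mem_univ, true_imp_iff]
    rw [prod_ite_zero]
    simp
  have hP : ∀ g, ((P g).card : ℝ) = ∑ A ∈ 𝒜, ∏ i, w A (g i) := by
    intro g
    simp only [hprod, P, card_filter]
    push_cast
    rfl
  have hPQ : ∀ g, disjPairs (P g) (Q g) = ∑ A ∈ 𝒜, ∑ B : ℬ, (∏ i, w A (g i)) * w A B *
      (if (k + 1) * (B.1 \ U g).card ≤ 2 * n then (1 : ℝ) else 0) := by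
    intro g
    rw [disjPairs_eq_sum]
    simp only [P, Q, sum_filter]
    refine sum_congr rfl fun A _ => ?_
    rw [hprod]
    split_ifs with hA
    · rw [← sum_coe_sort ℬ]
      refine sum_congr rfl fun B _ => ?_
      simp [w]
    · simp
  have hpow : ∀ A, ∑ g : Fin k → ℬ, ∏ i, w A (g i) = d A ^ k := by
    exact fun A => sum_prod_eq_pow (w A) k
  have hsumP : ∑ g, ((P g).card : ℝ) = b ^ k * ∑ A ∈ 𝒜, t A ^ k := by
    simp only [hP]
    rw [sum_comm, mul_sum]
    exact sum_congr rfl fun A _ => by rw [hpow, hdt, mul_pow]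
  have hsumPQ : b ^ (k + 1) * (∑ A ∈ 𝒜, t A ^ (k + 1)) / 2 ≤ ∑ g, disjPairs (P g) (Q g) := by
    simp only [hPQ]
    rw [sum_comm, mul_sum, sum_div]
    refine sum_le_sum fun A _ => ?_
    rw [← mul_pow, ← hdt]
    exact half_le_sum_good hn (fun B : ℬ => B.1) (w A) (hw A)
  have h1 := mul_sum_pow_le 𝒜 t ht ε hε.le hsum k
  have h2 := pow_mul_card_le 𝒜 t ht ε hε.le hsum (k + 1)
  obtain ⟨g, -, hg⟩ : ∃ g ∈ (univ : Finset (Fin k → ℬ)),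
      ε / 4 * b * (P g).card + ε ^ (k + 1) / 4 * 𝒜.card * b ≤ disjPairs (P g) (Q g) := by
    refine exists_le_of_sum_le univ_nonempty ?_
    refine le_trans ?_ hsumPQ
    rw [sum_add_distrib, ← mul_sum, hsumP]
    have hc : ((Fintype.card (Fin k → ℬ) : ℕ) : ℝ) = b ^ k := by simp [hb]
    rw [sum_const, card_univ, nsmul_eq_mul, hc]
    have hbk : 0 < b ^ (k + 1) := pow_pos hb0 _
    have e1 := mul_le_mul_of_nonneg_left h1 hbk.le
    have e2 := mul_le_mul_of_nonneg_left h2 hbk.le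
    rw [pow_succ b] at e1 e2 ⊢
    nlinarith
  refine ⟨U g, P g, filter_subset _ _, Q g, filter_subset _ _, fun A hA => (mem_filter.1 hA).2,
    fun B hB => (mem_filter.1 hB).2, ?_, ?_⟩
  · have hQ : ((Q g).card : ℝ) ≤ b := by
      rw [hb]; exact_mod_cast card_le_card (filter_subset _ _)
    have h3 : 0 ≤ ε ^ (k + 1) / 4 * 𝒜.card * b :=
      mul_nonneg (mul_nonneg (div_nonneg (pow_nonneg hε.le _) zero_le_four) (Nat.cast_nonneg _))
        hb0.le
    calc ε / 4 * (P g).card * (Q g).card ≤ ε / 4 * (P g).card * b :=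
          mul_le_mul_of_nonneg_left hQ (mul_nonneg (by linarith) (Nat.cast_nonneg _))
      _ ≤ _ := by linarith
  · have h3 : 0 ≤ ε / 4 * b * (P g).card :=
      mul_nonneg (mul_nonneg (by linarith) hb0.le) (Nat.cast_nonneg _)
    linarith

/-- The sets `R` that contain `S` and avoid `T` make up a `2^(-|S|-|T|)` fraction of all sets. -/
lemma two_pow_le_card_mul {n : ℕ} (S T : Finset (Fin n)) (hST : Disjoint S T) :
    2 ^ n ≤ 2 ^ (S.card + T.card) *
      (univ.filter (fun R : Finset (Fin n) => S ⊆ R ∧ Disjoint T R)).card := by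
  classical
  have h1 : (univ.filter (fun R : Finset (Fin n) => S ⊆ R ∧ Disjoint T R)) = Icc S Tᶜ := by
    ext R
    simp only [mem_filter, mem_univ, true_and, mem_Icc,
      subset_compl_iff_disjoint_left]
  have h2 : S ⊆ Tᶜ := subset_compl_iff_disjoint_right.2 hST
  have h3 : S.card ≤ Tᶜ.card := card_le_card h2
  have h4 : T.card + Tᶜ.card = n := by simp
  rw [h1, card_Icc_finset h2, ← pow_add]
  exact pow_le_pow_right₀ (by norm_num) (by omega)

/-- If all members of `𝒜` avoid `U` and are nearly contained in `V`, and vice versa for `ℬ`, then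
splitting the ground set at random yields cross-disjoint subfamilies. -/
lemma exists_split {n : ℕ} (𝒜 ℬ : Finset (Finset (Fin n))) (U V : Finset (Fin n)) (m : ℝ)
    (hAU : ∀ A ∈ 𝒜, Disjoint A U) (hBV : ∀ B ∈ ℬ, Disjoint B V)
    (hA : ∀ A ∈ 𝒜, ((A \ V).card : ℝ) ≤ m) (hB : ∀ B ∈ ℬ, ((B \ U).card : ℝ) ≤ m) :
    ∃ ℱ ⊆ 𝒜, ∃ 𝒢 ⊆ ℬ, (2 : ℝ) ^ (-(2 * m)) * disjPairs 𝒜 ℬ ≤ (ℱ.card : ℝ) * 𝒢.card ∧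
      ∀ F ∈ ℱ, ∀ G ∈ 𝒢, Disjoint F G := by
  classical
  let F : Finset (Fin n) → Finset (Finset (Fin n)) := fun R => 𝒜.filter (fun A => A \ V ⊆ R)
  let G : Finset (Fin n) → Finset (Finset (Fin n)) := fun R => ℬ.filter (fun B => Disjoint (B \ U) R)
  have hFG : ∀ R, ((F R).card : ℝ) * (G R).card =
      ∑ A ∈ 𝒜, ∑ B ∈ ℬ, if A \ V ⊆ R ∧ Disjoint (B \ U) R then (1 : ℝ) else 0 := by
    intro R
    simp only [F, G, card_filter]
    push_cast
    rw [sum_mul_sum]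
    refine sum_congr rfl fun A _ => sum_congr rfl fun B _ => ?_
    split_ifs <;> simp_all
  obtain ⟨R, -, hR⟩ : ∃ R ∈ (univ : Finset (Finset (Fin n))),
      (2 : ℝ) ^ (-(2 * m)) * disjPairs 𝒜 ℬ ≤ (F R).card * (G R).card := by
    refine exists_le_of_sum_le univ_nonempty ?_
    simp only [hFG]
    rw [sum_const, card_univ, Fintype.card_finset, Fintype.card_fin, nsmul_eq_mul, sum_comm,
      disjPairs_eq_sum, mul_sum, mul_sum]
    refine sum_le_sum fun A hAm => ?_
    rw [sum_comm, mul_sum, mul_sum]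
    refine sum_le_sum fun B hBm => ?_
    split_ifs with hd
    · have h1 := two_pow_le_card_mul (A \ V) (B \ U) (hd.mono sdiff_subset sdiff_subset)
      have h2 : ((2 ^ n : ℕ) : ℝ) ≤ (2 : ℝ) ^ (2 * m) *
          (univ.filter (fun R : Finset (Fin n) => A \ V ⊆ R ∧ Disjoint (B \ U) R)).card := by
        refine le_trans (Nat.cast_le.2 h1) ?_
        push_cast
        gcongr
        rw [← Real.rpow_natCast]
        refine Real.rpow_le_rpow_of_exponent_le (by norm_num) ?_
        push_cast
        linarith [hA A hAm, hB B hBm]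
      rw [sum_boole, mul_one, Real.rpow_neg (by norm_num), ← div_eq_mul_inv,
        div_le_iff₀ (by positivity), mul_comm]
      rwa [mul_comm] at h2 ⊢
    · rw [mul_zero, mul_zero]
      exact sum_nonneg fun R _ => by split_ifs <;> norm_num
  refine ⟨F R, filter_subset _ _, G R, filter_subset _ _, hR, fun A hA' B hB' => ?_⟩
  simp only [F, G, mem_filter] at hA' hB'
  rw [Finset.disjoint_left]
  intro x hxA hxB
  have hxV : x ∉ V := Finset.disjoint_left.1 (hBV B hB'.1) hxB
  have hxU : x ∉ U := Finset.disjoint_left.1 (hAU A hA'.1) hxA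
  exact Finset.disjoint_left.1 hB'.2 (mem_sdiff.2 ⟨hxB, hxU⟩)
    (hA'.2 (mem_sdiff.2 ⟨hxA, hxV⟩))

/-- The bound obtained from two cleanings and a random split, with a free parameter `k`. -/
lemma exists_cross_disjoint {n : ℕ} (hn : 0 < n) (k : ℕ) (𝒜 ℬ : Finset (Finset (Fin n)))
    (h𝒜 : 𝒜.Nonempty) (hℬ : ℬ.Nonempty) (ε : ℝ) (hε : 0 < ε)
    (h : ε * 𝒜.card * ℬ.card ≤ disjPairs 𝒜 ℬ) :
    ∃ ℱ ⊆ 𝒜, ∃ 𝒢 ⊆ ℬ,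
      (2 : ℝ) ^ (-(2 * (2 * n / (k + 1 : ℝ)))) *
        ((ε / 4) ^ (k + 1) / 4 * (ε ^ (k + 1) / 4)) * 𝒜.card * ℬ.card ≤ (ℱ.card : ℝ) * 𝒢.card ∧
      ∀ F ∈ ℱ, ∀ G ∈ 𝒢, Disjoint F G := by
  obtain ⟨U, 𝒜₁, h𝒜₁, ℬ₁, hℬ₁, hAU, hBU, hrel, habs⟩ := exists_union hn k 𝒜 ℬ hℬ ε hε h
  have hpos : 0 < disjPairs 𝒜₁ ℬ₁ := by
    refine lt_of_lt_of_le ?_ habs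
    have : (0 : ℝ) < 𝒜.card := by exact_mod_cast h𝒜.card_pos
    have : (0 : ℝ) < ℬ.card := by exact_mod_cast hℬ.card_pos
    positivity
  have hle := disjPairs_le 𝒜₁ ℬ₁
  have h𝒜₁ne : 𝒜₁.Nonempty := by
    rw [nonempty_iff_ne_empty]
    rintro rfl
    simp at hle
    linarith
  rw [disjPairs_comm, mul_right_comm] at hrel
  obtain ⟨V, ℬ₂, hℬ₂, 𝒜₂, h𝒜₂, hBV, hAV, -, habs₂⟩ :=
    exists_union hn k ℬ₁ 𝒜₁ h𝒜₁ne (ε / 4) (by positivity) hrel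
  rw [disjPairs_comm] at habs₂
  have hk : (0 : ℝ) < k + 1 := by positivity
  obtain ⟨ℱ, hℱ, 𝒢, h𝒢, hcard, hdisj⟩ := exists_split 𝒜₂ ℬ₂ U V (2 * n / (k + 1 : ℝ))
    (fun A hA => hAU A (h𝒜₂ hA)) hBV
    (fun A hA => by
      rw [le_div_iff₀ hk, mul_comm]; exact_mod_cast hAV A hA)
    (fun B hB => by
      rw [le_div_iff₀ hk, mul_comm]; exact_mod_cast hBU B (hℬ₂ hB))
  refine ⟨ℱ, (hℱ.trans h𝒜₂).trans h𝒜₁, 𝒢, (h𝒢.trans hℬ₂).trans hℬ₁, le_trans ?_ hcard, hdisj⟩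
  calc _ = (2 : ℝ) ^ (-(2 * (2 * n / (k + 1 : ℝ)))) *
        ((ε / 4) ^ (k + 1) / 4 * (ε ^ (k + 1) / 4 * 𝒜.card * ℬ.card)) := by ring
    _ ≤ (2 : ℝ) ^ (-(2 * (2 * n / (k + 1 : ℝ)))) *
        ((ε / 4) ^ (k + 1) / 4 * (𝒜₁.card * ℬ₁.card)) := by
      refine mul_le_mul_of_nonneg_left (mul_le_mul_of_nonneg_left ?_ ?_) ?_
      · exact habs.trans hle
      · positivity
      · positivity
    _ ≤ _ := by
      refine mul_le_mul_of_nonneg_left ?_ (by positivity)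
      linarith

/-- if at least an `ε`-fraction of pairs in `𝒜 × ℬ` are disjoint
(with `2^{-n} < ε < 1/2`), then there are cross-disjoint subfamilies `ℱ ⊆ 𝒜`, `𝒢 ⊆ ℬ`
with `|ℱ||𝒢| ≥ 2^{-C√(n log₂(1/ε))}|𝒜||ℬ|`. -/
theorem statement10 :
    ∃ C : ℝ, 0 < C ∧ ∀ n : ℕ, 0 < n →
      ∀ 𝒜 ℬ : Finset (Finset (Fin n)), 𝒜.Nonempty → ℬ.Nonempty →
        ∀ ε : ℝ, (2 : ℝ) ^ (-(n : ℝ)) < ε → ε < 1 / 2 →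
          ε * 𝒜.card * ℬ.card ≤
            (((𝒜 ×ˢ ℬ).filter (fun p => Disjoint p.1 p.2)).card : ℝ) →
          ∃ ℱ ⊆ 𝒜, ∃ 𝒢 ⊆ ℬ,
            (2 : ℝ) ^ (-(C * Real.sqrt (n * Real.logb 2 (1 / ε)))) *
                𝒜.card * ℬ.card ≤ (ℱ.card : ℝ) * (𝒢.card : ℝ) ∧
            ∀ F ∈ ℱ, ∀ G ∈ 𝒢, Disjoint F G := by
  refine ⟨16, by norm_num, fun n hn 𝒜 ℬ h𝒜 hℬ ε hε1 hε2 h => ?_⟩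
  have hε : 0 < ε := lt_trans (by positivity) hε1
  set L := Real.logb 2 (1 / ε) with hL
  have hL' : L = -Real.logb 2 ε := by rw [hL, one_div, Real.logb_inv]
  have hεL : ε = (2 : ℝ) ^ (-L) := by
    rw [hL', neg_neg, Real.rpow_logb (by norm_num) (by norm_num) hε]
  have hL1 : 1 < L := by
    rw [hL, Real.lt_logb_iff_rpow_lt (by norm_num) (by positivity), Real.rpow_one,
      lt_div_iff₀ hε]
    linarith
  have hLn : L < n := by
    have := (Real.rpow_lt_rpow_left_iff (x := (2 : ℝ)) (by norm_num)).1 (hεL ▸ hε1)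
    linarith
  have hn1 : (1 : ℝ) ≤ n := by exact_mod_cast hn
  -- With `r = √(n/L)` and `s = √(nL)`: `n = r * s` and `r * L = s`.
  set s := Real.sqrt (n * L) with hs
  have hs2 : s * s = n * L := Real.mul_self_sqrt (by positivity)
  have hs1 : 1 ≤ s := by
    rw [hs, Real.one_le_sqrt]; nlinarith
  have hL0 : 0 < L := by linarith
  set r := s / L with hr
  have hrL : r * L = s := by rw [hr]; field_simp
  have hrs : r * s = n := by rw [hr, div_mul_eq_mul_div, hs2]; field_simp
  have hr1 : 1 ≤ r := by
    rw [hr, one_le_div hL0]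
    by_contra hlt
    push Not at hlt
    nlinarith
  -- `k = ⌊r⌋` gives `r < k + 1 ≤ 2r`.
  set k := ⌊r⌋₊ with hk
  have hk1 : r < k + 1 := Nat.lt_floor_add_one r
  have hk2 : (k : ℝ) ≤ r := Nat.floor_le (by linarith)
  obtain ⟨ℱ, hℱ, 𝒢, h𝒢, hcard, hdisj⟩ := exists_cross_disjoint hn k 𝒜 ℬ h𝒜 hℬ ε hε h
  refine ⟨ℱ, hℱ, 𝒢, h𝒢, le_trans ?_ hcard, hdisj⟩
  refine mul_le_mul_of_nonneg_right (mul_le_mul_of_nonneg_right ?_ (Nat.cast_nonneg _))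
    (Nat.cast_nonneg _)
  have hfour : (4 : ℝ) = (2 : ℝ) ^ (2 : ℝ) := by norm_num
  have hE : (ε / 4) ^ (k + 1) / 4 * (ε ^ (k + 1) / 4) =
      (2 : ℝ) ^ (-(4 + (2 * L + 2) * (k + 1))) := by
    rw [hfour, hεL, ← Real.rpow_sub (by norm_num), ← Real.rpow_natCast, ← Real.rpow_natCast,
      ← Real.rpow_mul (by norm_num), ← Real.rpow_mul (by norm_num), ← Real.rpow_sub (by norm_num),
      ← Real.rpow_sub (by norm_num), ← Real.rpow_add (by norm_num)]
    congr 1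
    push_cast
    ring
  rw [hE, ← Real.rpow_add (by norm_num)]
  refine Real.rpow_le_rpow_of_exponent_le (by norm_num) ?_
  have h1 : 2 * n / (k + 1 : ℝ) ≤ 2 * s := by
    rw [div_le_iff₀ (by positivity)]
    nlinarith
  have h2 : (2 * L + 2) * (k + 1) ≤ 8 * s := by
    calc (2 * L + 2) * ((k : ℝ) + 1) ≤ (4 * L) * (2 * r) := by
          gcongr <;> linarith
      _ = 8 * s := by rw [← hrL]; ring
  linarith
end

section
/- There exists a universal constant C > 0 such that the following holds for every positive integer n. Let μ_A and μ_B be probability distributions on the power set 2^[n] and let ε ∈ (0, 1/2). Then there exist a positive integer m ≤ 2^{C·√(n·log₂(1/ε))}, a partition of 2^[n] × 2^[n] into combinatorial rectangles R₁ = ℱ₁ × 𝒢₁, …, R_m = ℱ_m × 𝒢_m, and labels b₁, …, b_m ∈ {0, 1}, such that Σ_{i=1}^m Σ_{(A,B)∈R_i, DISJ_n(A,B)≠b_i} μ_A(A)·μ_B(B) ≤ ε; that is, when (A, B) is sampled from the product distribution μ_A × μ_B, the probability that the label of the rectangle containing (A, B) differs from DISJ_n(A, B) is at most ε. -/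
/-!
The rectangles are the leaves of a deterministic communication protocol, so the task is to build,
for a given product distribution, a protocol with `2 ^ O(√(nk))` leaves and error `ε`, where
`k = log₂ (1 / ε)`. If `k > n`, Alice simply announces her set (`solvable_exact`). Otherwise put
`s ≈ √(nk)` and `t ≈ √(n / k)`, so that `t * s ≥ n`.

**Large sets** (`phase`). As long as one player has a possible set `B` of size at least `s` in the
current ground set which is disjoint from at least an `ε`-fraction of the other player's
distribution, the other player announces whether her set is disjoint from `B`. A `yes` removes `B`
from the ground set, so there are at most `t` of them; a `no` removes an `ε`-fraction of the mass,
and the branch is cut off after `r ≈ (t + k) / ε` of them. Weighing leaves by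
`(2 / ε) ^ t * (1 + ε) ^ r` and the cut-off mass by `2 ^ t * (1 - ε / 2) ^ r` turns both bounds
into one-step inductions (`phase_pivot`). When no such `B` is left, pairs containing a set of size at
least `s` may all be declared intersecting at a loss of `2 ε` (`phase_final`).

**Small sets** (`solvable_small`). For sets of size less than `s` a distributional form of the
Håstad–Wigderson protocol is used. Given random sets `Z`, Alice announces the first one containing
her set `A` (about `|A|` bits), and Bob may replace `B` by `B ∩ Z`, which halves `B` on average when
`A` and `B` are disjoint; then the roles are exchanged. With a budget of `T` bits the probability of
not finishing on a disjoint pair is at most `3 ^ |A| * 2 ^ |B| * (4 / 5) ^ T`, the potential being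
an exponential moment of the total communication. Hence `T = O(s)` suffices. The random sets are
fixed by averaging (`Solvable.average`).
-/

open Finset Classical

/-! ### Protocols and their rectangles -/

/-- `Protocol h L`: the function `h` is the output of a deterministic two-party protocol tree with
`L` leaves. Each inner node splits on a predicate of Alice's (first) or Bob's (second) input. -/
inductive Protocol {V : Type} : (V → V → Bool) → ℕ → Prop
  | leaf (c : Bool) : Protocol (fun _ _ => c) 1
  | alice (p : V → Prop) {h₁ h₂ : V → V → Bool} {L₁ L₂ : ℕ} :
      Protocol h₁ L₁ → Protocol h₂ L₂ →
        Protocol (fun a b => if p a then h₁ a b else h₂ a b) (L₁ + L₂)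
  | bob (p : V → Prop) {h₁ h₂ : V → V → Bool} {L₁ L₂ : ℕ} :
      Protocol h₁ L₁ → Protocol h₂ L₂ →
        Protocol (fun a b => if p b then h₁ a b else h₂ a b) (L₁ + L₂)

lemma Protocol.swap {V : Type} {h : V → V → Bool} {L : ℕ} (H : Protocol h L) :
    Protocol (fun a b => h b a) L := by
  induction H with
  | leaf c => exact .leaf c
  | alice p _ _ ih₁ ih₂ => exact .bob p ih₁ ih₂
  | bob p _ _ ih₁ ih₂ => exact .alice p ih₁ ih₂

lemma Protocol.exists_rectangles {V : Type} [Fintype V] {h : V → V → Bool} {L : ℕ}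
    (H : Protocol h L) :
    ∃ (ι : Type) (_ : Fintype ι) (F G : ι → Finset V) (c : ι → Bool), Fintype.card ι = L ∧
      (∀ a b, ∃! i, a ∈ F i ∧ b ∈ G i) ∧ ∀ i a b, a ∈ F i → b ∈ G i → h a b = c i := by
  induction H with
  | leaf c =>
    exact ⟨Unit, inferInstance, fun _ => univ, fun _ => univ, fun _ => c, by simp,
      fun a b => ⟨(), by simp, by simp⟩, by simp⟩
  | alice p _ _ ih₁ ih₂ =>
    obtain ⟨ι₁, _, F₁, G₁, c₁, hc₁, hu₁, hh₁⟩ := ih₁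
    obtain ⟨ι₂, _, F₂, G₂, c₂, hc₂, hu₂, hh₂⟩ := ih₂
    refine ⟨ι₁ ⊕ ι₂, inferInstance,
      Sum.elim (fun i => (F₁ i).filter p) (fun i => (F₂ i).filter (fun a => ¬ p a)),
      Sum.elim G₁ G₂, Sum.elim c₁ c₂, by simp [hc₁, hc₂], ?_, ?_⟩
    · intro a b
      by_cases hp : p a
      · obtain ⟨i, hi, hi'⟩ := hu₁ a b
        refine ⟨.inl i, by simpa [hp] using hi, ?_⟩
        rintro (j | j) hj
        · simp [hp] at hj
          simp [hi' j hj]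
        · simp [hp] at hj
      · obtain ⟨i, hi, hi'⟩ := hu₂ a b
        refine ⟨.inr i, by simpa [hp] using hi, ?_⟩
        rintro (j | j) hj
        · simp [hp] at hj
        · simp [hp] at hj
          simp [hi' j hj]
    · rintro (i | i) a b ha hb
      · simp at ha hb
        simpa [ha.2] using hh₁ i a b ha.1 hb
      · simp at ha hb
        simpa [ha.2] using hh₂ i a b ha.1 hb
  | bob p _ _ ih₁ ih₂ =>
    obtain ⟨ι₁, _, F₁, G₁, c₁, hc₁, hu₁, hh₁⟩ := ih₁
    obtain ⟨ι₂, _, F₂, G₂, c₂, hc₂, hu₂, hh₂⟩ := ih₂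
    refine ⟨ι₁ ⊕ ι₂, inferInstance, Sum.elim F₁ F₂,
      Sum.elim (fun i => (G₁ i).filter p) (fun i => (G₂ i).filter (fun a => ¬ p a)),
      Sum.elim c₁ c₂, by simp [hc₁, hc₂], ?_, ?_⟩
    · intro a b
      by_cases hp : p b
      · obtain ⟨i, hi, hi'⟩ := hu₁ a b
        refine ⟨.inl i, by simpa [hp] using hi, ?_⟩
        rintro (j | j) hj
        · simp [hp] at hj
          simp [hi' j hj]
        · simp [hp] at hj
      · obtain ⟨i, hi, hi'⟩ := hu₂ a b
        refine ⟨.inr i, by simpa [hp] using hi, ?_⟩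
        rintro (j | j) hj
        · simp [hp] at hj
        · simp [hp] at hj
          simp [hi' j hj]
    · rintro (i | i) a b ha hb
      · simp at ha hb
        simpa [hb.2] using hh₁ i a b ha hb.1
      · simp at ha hb
        simpa [hb.2] using hh₂ i a b ha hb.1

/-! ### Error of a protocol under a product measure -/

/-- The 0/1 loss of answering `c` when the truth is `P`. -/
noncomputable def loss (P : Prop) (c : Bool) : ℝ := if (P ↔ c = true) then 0 else 1

lemma loss_le_one (P : Prop) (c : Bool) : loss P c ≤ 1 := by
  unfold loss; split_ifs <;> norm_num

/-- The integral of `W` against the product of the (not necessarily normalised) weights `μ`, `ν`. -/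
noncomputable def cost {V : Type} [Fintype V] (μ ν : V → ℝ) (W : V → V → ℝ) : ℝ :=
  ∑ a, ∑ b, μ a * ν b * W a b

section
variable {V : Type} [Fintype V]

lemma cost_mono {μ ν : V → ℝ} (hμ : ∀ a, 0 ≤ μ a) (hν : ∀ b, 0 ≤ ν b) {W W' : V → V → ℝ}
    (h : ∀ a b, W a b ≤ W' a b) : cost μ ν W ≤ cost μ ν W' :=
  sum_le_sum fun a _ => sum_le_sum fun b _ =>
    mul_le_mul_of_nonneg_left (h a b) (mul_nonneg (hμ a) (hν b))

lemma cost_swap (μ ν : V → ℝ) (W : V → V → ℝ) :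
    cost μ ν W = cost ν μ (fun a b => W b a) := by
  unfold cost
  rw [sum_comm]
  exact sum_congr rfl fun a _ => sum_congr rfl fun b _ => by ring

lemma cost_const (μ ν : V → ℝ) (c : ℝ) :
    cost μ ν (fun _ _ => c) = (∑ a, μ a) * (∑ b, ν b) * c := by
  unfold cost
  rw [sum_mul_sum, sum_mul]
  exact sum_congr rfl fun a _ => by rw [sum_mul]

lemma cost_split (p : V → Prop) (μ ν : V → ℝ) (W : V → V → ℝ) :
    cost μ ν W = cost (fun a => if p a then μ a else 0) ν W
      + cost (fun a => if p a then 0 else μ a) ν W := by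
  unfold cost
  rw [← sum_add_distrib]
  refine sum_congr rfl fun a _ => ?_
  rw [← sum_add_distrib]
  refine sum_congr rfl fun b _ => ?_
  by_cases hp : p a <;> simp [hp]

lemma cost_congr {μ ν : V → ℝ} {W W' : V → V → ℝ}
    (h : ∀ a b, μ a ≠ 0 → W a b = W' a b) : cost μ ν W = cost μ ν W' := by
  refine sum_congr rfl fun a _ => sum_congr rfl fun b _ => ?_
  by_cases ha : μ a = 0
  · simp [ha]
  · rw [h a b ha]

/-- For every product measure some protocol with `L` leaves computes `D` with error at most the
integral of `W`. Think of `W a b` as the error probability of a randomised protocol at `(a, b)`;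
quantifying over all weights is what allows restricting to a branch of a protocol. -/
def Solvable (D : V → V → Prop) (W : V → V → ℝ) (L : ℕ) : Prop :=
  ∀ μ ν : V → ℝ, (∀ a, 0 ≤ μ a) → (∀ b, 0 ≤ ν b) →
    ∃ h, Protocol h L ∧ cost μ ν (fun a b => loss (D a b) (h a b)) ≤ cost μ ν W

lemma Solvable.mono {D : V → V → Prop} {W W' : V → V → ℝ} {L : ℕ} (H : Solvable D W L)
    (h : ∀ a b, W a b ≤ W' a b) : Solvable D W' L := by
  intro μ ν hμ hν
  obtain ⟨f, hf, hc⟩ := H μ ν hμ hν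
  exact ⟨f, hf, hc.trans (cost_mono hμ hν h)⟩

lemma Solvable.swap {D : V → V → Prop} {W : V → V → ℝ} {L : ℕ} (H : Solvable D W L) :
    Solvable (fun a b => D b a) (fun a b => W b a) L := by
  intro μ ν hμ hν
  obtain ⟨f, hf, hc⟩ := H ν μ hν hμ
  refine ⟨_, hf.swap, ?_⟩
  rw [cost_swap μ ν, cost_swap μ ν]
  exact hc

lemma solvable_leaf (D : V → V → Prop) (c : Bool) :
    Solvable D (fun a b => loss (D a b) c) 1 :=
  fun _ _ _ _ => ⟨_, .leaf c, le_rfl⟩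

/-- One message from Alice. On each branch the target `D` may be replaced by an equivalent one. -/
lemma Solvable.alice {D D₁ D₂ : V → V → Prop} {W W₁ W₂ : V → V → ℝ} {L₁ L₂ : ℕ} (p : V → Prop)
    (H₁ : Solvable D₁ W₁ L₁) (H₂ : Solvable D₂ W₂ L₂)
    (h₁ : ∀ a b, p a → (D a b ↔ D₁ a b) ∧ W₁ a b ≤ W a b)
    (h₂ : ∀ a b, ¬ p a → (D a b ↔ D₂ a b) ∧ W₂ a b ≤ W a b) :
    Solvable D W (L₁ + L₂) := by
  intro μ ν hμ hν
  have hμ₁ : ∀ a, 0 ≤ (if p a then μ a else 0) := fun a => by split_ifs <;> simp [hμ]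
  have hμ₂ : ∀ a, 0 ≤ (if p a then 0 else μ a) := fun a => by split_ifs <;> simp [hμ]
  obtain ⟨f₁, hf₁, hc₁⟩ := H₁ _ ν hμ₁ hν
  obtain ⟨f₂, hf₂, hc₂⟩ := H₂ _ ν hμ₂ hν
  refine ⟨_, .alice p hf₁ hf₂, ?_⟩
  rw [cost_split p μ ν, cost_split p μ ν W]
  refine add_le_add ?_ ?_
  · refine le_trans (le_of_eq ?_) (hc₁.trans ?_)
    · refine cost_congr fun a b ha => ?_
      have hp : p a := by by_contra hp; simp [hp] at ha
      simp [hp, (h₁ a b hp).1]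
    · refine sum_le_sum fun a _ => sum_le_sum fun b _ => ?_
      by_cases hp : p a
      · exact mul_le_mul_of_nonneg_left (h₁ a b hp).2 (mul_nonneg (hμ₁ a) (hν b))
      · simp [hp]
  · refine le_trans (le_of_eq ?_) (hc₂.trans ?_)
    · refine cost_congr fun a b ha => ?_
      have hp : ¬ p a := by by_contra hp; simp [hp] at ha
      simp [hp, (h₂ a b hp).1]
    · refine sum_le_sum fun a _ => sum_le_sum fun b _ => ?_
      by_cases hp : p a
      · simp [hp]
      · exact mul_le_mul_of_nonneg_left (h₂ a b hp).2 (mul_nonneg (hμ₂ a) (hν b))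

/-- Alice announces the class `κ a` of her input, and the players continue with the protocol
for that class. -/
lemma Solvable.multi {D : V → V → Prop} {W : ℕ → V → V → ℝ} {L : ℕ → ℕ} (m : ℕ)
    (H : ∀ i ≤ m, Solvable D (W i) (L i)) (κ : V → ℕ) (hκ : ∀ a, κ a ≤ m) :
    Solvable D (fun a b => W (κ a) a b) (∑ i ∈ range (m + 1), L i) := by
  induction m generalizing κ with
  | zero =>
    simp only [zero_add, sum_range_one]
    exact (H 0 le_rfl).mono fun a b => by rw [Nat.le_zero.mp (hκ a)]
  | succ m ih =>
    rw [sum_range_succ]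
    refine Solvable.alice (fun a => κ a ≤ m)
      (ih (fun i hi => H i (by omega)) (fun a => min (κ a) m) (fun a => by simp))
      (H (m + 1) le_rfl) (fun a b ha => ⟨Iff.rfl, ?_⟩) (fun a b ha => ⟨Iff.rfl, ?_⟩)
    · simp only [min_eq_left ha]; exact le_rfl
    · rw [show κ a = m + 1 by have := hκ a; omega]

/-- Derandomisation: a random choice of `i` can be fixed to one that is at least as good as the
average for the given measure. -/
lemma Solvable.average {ι : Type} (S : Finset ι) (w : ι → ℝ) (hw : ∀ i ∈ S, 0 ≤ w i)
    (hw1 : ∑ i ∈ S, w i = 1) {D : V → V → Prop} {W : ι → V → V → ℝ} {L : ℕ}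
    (H : ∀ i, Solvable D (W i) L) :
    Solvable D (fun a b => ∑ i ∈ S, w i * W i a b) L := by
  intro μ ν hμ hν
  have hsum : cost μ ν (fun a b => ∑ i ∈ S, w i * W i a b) = ∑ i ∈ S, w i * cost μ ν (W i) := by
    unfold cost
    simp only [mul_sum]
    rw [sum_comm' (t' := univ) (s' := fun _ => S) (by simp)]
    refine sum_congr rfl fun a _ => ?_
    rw [sum_comm]
    refine sum_congr rfl fun i _ => sum_congr rfl fun b _ => by ring
  obtain ⟨i, hi, hle⟩ : ∃ i ∈ S, cost μ ν (W i) ≤ ∑ i ∈ S, w i * cost μ ν (W i) := by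
    by_contra! hcon
    set c := ∑ i ∈ S, w i * cost μ ν (W i) with hc
    have h1 : ∑ i ∈ S, w i * c = c := by rw [← sum_mul, hw1, one_mul]
    obtain ⟨j, hj, hj0⟩ : ∃ j ∈ S, 0 < w j := by
      by_contra! h0
      have := sum_nonpos h0
      linarith
    have h2 : ∑ i ∈ S, w i * c < ∑ i ∈ S, w i * cost μ ν (W i) :=
      sum_lt_sum (fun i hi => mul_le_mul_of_nonneg_left (hcon i hi).le (hw i hi))
        ⟨j, hj, mul_lt_mul_of_pos_left (hcon j hj) hj0⟩
    linarith
  obtain ⟨f, hf, hcf⟩ := H i μ ν hμ hν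
  exact ⟨f, hf, by rw [hsum]; exact hcf.trans hle⟩

end

/-! ### Disjointness of small sets -/

/-- For a uniformly random `Z` and disjoint `A`, `B`, the expectation of `3 ^ |B ∩ Z|` over the event
`A ⊆ Z`: each point of `A` contributes `1 / 2` and each point of `B` contributes `(1 + 3) / 2`. -/
lemma sum_superset_pow {n : ℕ} (A B : Finset (Fin n)) (hAB : Disjoint A B) :
    ∑ Z : Finset (Fin n), (1 / 2 : ℝ) ^ n * (if A ⊆ Z then (3 : ℝ) ^ (B ∩ Z).card else 0)
      = (1 / 2) ^ A.card * 2 ^ B.card := by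
  have key := Finset.prod_add (fun u => if u ∈ B then (3 / 2 : ℝ) else 1 / 2)
    (fun u => if u ∈ A then (0 : ℝ) else 1 / 2) (univ : Finset (Fin n))
  have hL : ∏ u : Fin n, ((if u ∈ B then (3 / 2 : ℝ) else 1 / 2) +
      (if u ∈ A then (0 : ℝ) else 1 / 2)) = (1 / 2) ^ A.card * 2 ^ B.card := by
    have : ∀ u : Fin n, ((if u ∈ B then (3 / 2 : ℝ) else 1 / 2) +
      (if u ∈ A then (0 : ℝ) else 1 / 2)) =
        (if u ∈ A then (1 / 2 : ℝ) else 1) * (if u ∈ B then (2 : ℝ) else 1) := by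
      intro u
      by_cases hA : u ∈ A
      · have hB : u ∉ B := Finset.disjoint_left.mp hAB hA
        simp [hA, hB]
      · by_cases hB : u ∈ B <;> simp [hA, hB] <;> norm_num
    rw [prod_congr rfl fun u _ => this u, prod_mul_distrib]
    simp
  rw [← hL, key, powerset_univ]
  refine sum_congr rfl fun Z _ => ?_
  have h1 : ∏ u ∈ Z, (if u ∈ B then (3 / 2 : ℝ) else 1 / 2)
      = (1 / 2) ^ Z.card * 3 ^ (B ∩ Z).card := by
    have : ∀ u ∈ Z, (if u ∈ B then (3 / 2 : ℝ) else 1 / 2) = 1 / 2 * (if u ∈ B then 3 else 1) := by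
      intro u _
      split_ifs <;> norm_num
    rw [prod_congr rfl this, prod_mul_distrib, prod_const, Finset.prod_ite, prod_const, prod_const,
      one_pow, mul_one, Finset.filter_mem_eq_inter, Finset.inter_comm]
  by_cases hAZ : A ⊆ Z
  · have h2 : ∏ u ∈ univ \ Z, (if u ∈ A then (0 : ℝ) else 1 / 2) = (1 / 2) ^ (n - Z.card) := by
      have : ∀ u ∈ univ \ Z, (if u ∈ A then (0 : ℝ) else 1 / 2) = 1 / 2 := by
        intro u hu
        have : u ∉ A := fun h => (mem_sdiff.mp hu).2 (hAZ h)
        simp [this]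
      rw [prod_congr rfl this, prod_const, card_sdiff_of_subset (subset_univ _)]
      simp
    have hZ : Z.card ≤ n := by simpa using card_le_univ Z
    rw [h1, h2, if_pos hAZ]
    nth_rewrite 1 [← Nat.add_sub_of_le hZ]
    rw [pow_add]
    ring
  · obtain ⟨u, hu, huZ⟩ := Finset.not_subset.mp hAZ
    rw [if_neg hAZ, prod_eq_zero (s := univ \ Z) (i := u) (by simp [huZ]) (by simp [hu])]
    simp

section
variable {V : Type} {n : ℕ}

/-- Disjointness of the sets `f a` and `g b` currently attached to the inputs `a` and `b`. The maps
`f`, `g` change during a protocol, as points irrelevant for the intersection are discarded. -/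
def DisjRel (f g : V → Finset (Fin n)) (a b : V) : Prop := Disjoint (f a) (g b)

/-- The error potential with budget `T`: it charges disjoint pairs only, a factor `x` per point of
Alice's set and `y` per point of Bob's. The player about to speak is charged `3`, the other `2`. -/
noncomputable def pot (x y : ℝ) (T : ℕ) (f g : V → Finset (Fin n)) (a b : V) : ℝ :=
  if DisjRel f g a b then x ^ (f a).card * y ^ (g b).card * (4 / 5) ^ T else 0

lemma disjRel_swap (f g : V → Finset (Fin n)) (a b : V) : DisjRel f g a b ↔ DisjRel g f b a :=
  disjoint_comm

lemma disjRel_inter {f g : V → Finset (Fin n)} {Z : Finset (Fin n)} {a b : V} (h : f a ⊆ Z) :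
    DisjRel f g a b ↔ DisjRel f (fun b => g b ∩ Z) a b := by
  unfold DisjRel
  constructor
  · exact fun H => H.mono_right inter_subset_left
  · intro H
    rw [Finset.disjoint_left] at H ⊢
    exact fun u hu hub => H hu (mem_inter.mpr ⟨hub, h hu⟩)

lemma pot_nonneg {x y : ℝ} (hx : 0 ≤ x) (hy : 0 ≤ y) (T : ℕ) (f g : V → Finset (Fin n)) (a b : V) :
    0 ≤ pot x y T f g a b := by
  unfold pot; split_ifs <;> positivity

lemma Protocol.pos {h : V → V → Bool} {L : ℕ} (H : Protocol h L) : 0 < L := by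
  induction H <;> omega

lemma Protocol.add_leaves {h : V → V → Bool} {L : ℕ} (H : Protocol h L) (k : ℕ) :
    Protocol h (L + k) := by
  induction k with
  | zero => exact H
  | succ k ih =>
    have := Protocol.alice (fun _ => True) ih (.leaf true)
    simpa [add_assoc] using this

variable [Fintype V]

/-- Alice looks for a set containing `f a` among `m` random sets `Z`. On success Bob speaks next with
his set cut down to `Z`, with expected potential `pot 2 2`; with probability
`(1 - 2 ^ (-|f a|)) ^ m` all attempts fail and Alice starts again. -/
lemma solvable_tries (T N : ℕ)
    (H : ∀ f g : V → Finset (Fin n), Solvable (DisjRel f g) (pot 3 2 T f g) N)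
    (f g : V → Finset (Fin n)) (m : ℕ) :
    Solvable (DisjRel f g)
      (fun a b => pot 2 2 T f g a b + (1 - (1 / 2) ^ (f a).card) ^ m * pot 3 2 T f g a b)
      ((m + 1) * N) := by
  induction m with
  | zero =>
    simp only [zero_add, one_mul]
    refine (H f g).mono fun a b => ?_
    have := pot_nonneg (x := 2) (y := 2) (by norm_num) (by norm_num) T f g a b
    simp only [pow_zero, one_mul]
    linarith
  | succ m ih =>
    have step : ∀ Z : Finset (Fin n), Solvable (DisjRel f g)
        (fun a b => if f a ⊆ Z then pot 2 3 T f (fun b => g b ∩ Z) a b else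
          pot 2 2 T f g a b + (1 - (1 / 2) ^ (f a).card) ^ m * pot 3 2 T f g a b)
        (N + (m + 1) * N) := by
      intro Z
      refine Solvable.alice (fun a => f a ⊆ Z) ((H (fun b => g b ∩ Z) f).swap) ih
        (fun a b ha => ⟨?_, ?_⟩) (fun a b ha => ⟨Iff.rfl, ?_⟩)
      · rw [disjRel_inter ha, disjRel_swap]
      · simp only [if_pos ha, pot]
        rw [disjRel_swap]
        split_ifs
        · exact le_of_eq (by ring)
        · exact le_rfl
      · simp only [if_neg ha]; exact le_rfl
    have avg := Solvable.average (univ : Finset (Finset (Fin n))) (fun _ => (1 / 2 : ℝ) ^ n)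
      (fun _ _ => by positivity) (by simp) step
    have hN : N + (m + 1) * N = (m + 1 + 1) * N := by ring
    rw [hN] at avg
    refine avg.mono fun a b => le_of_eq ?_
    by_cases hD : DisjRel f g a b
    · set e := pot 2 2 T f g a b + (1 - (1 / 2) ^ (f a).card) ^ m * pot 3 2 T f g a b with he
      have h1 : ∀ Z : Finset (Fin n), (1 / 2 : ℝ) ^ n *
          (if f a ⊆ Z then pot 2 3 T f (fun b => g b ∩ Z) a b else e) =
          2 ^ (f a).card * (4 / 5) ^ T *
            ((1 / 2 : ℝ) ^ n * (if f a ⊆ Z then (3 : ℝ) ^ (g b ∩ Z).card else 0)) +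
          (e * (1 / 2 : ℝ) ^ n
            - e * ((1 / 2 : ℝ) ^ n * (if f a ⊆ Z then (3 : ℝ) ^ (∅ ∩ Z).card else 0))) := by
        intro Z
        by_cases hZ : f a ⊆ Z
        · have := (disjRel_inter (g := g) (b := b) hZ).mp hD
          simp only [if_pos hZ, pot, if_pos this]
          simp only [empty_inter, card_empty, pow_zero]
          ring
        · simp only [if_neg hZ]; ring
      rw [sum_congr rfl fun Z _ => h1 Z, sum_add_distrib, sum_sub_distrib, ← mul_sum,
        sum_superset_pow _ _ hD, ← mul_sum, ← mul_sum, sum_superset_pow _ _ (disjoint_empty_right _)]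
      have h2 : ∑ _Z : Finset (Fin n), (1 / 2 : ℝ) ^ n = 1 := by simp
      rw [h2, he]
      simp only [pot, if_pos hD, card_empty, pow_zero, pow_succ]
      have h3 : (2 : ℝ) ^ (f a).card * (1 / 2) ^ (f a).card = 1 := by
        rw [← mul_pow]; norm_num
      ring
    · have h0 : ∀ Z : Finset (Fin n), f a ⊆ Z → ¬ DisjRel f (fun b => g b ∩ Z) a b :=
        fun Z hZ => (disjRel_inter hZ).not.mp hD
      simp only [pot, if_neg hD, mul_zero, add_zero]
      refine sum_eq_zero fun Z _ => ?_
      by_cases hZ : f a ⊆ Z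
      · simp [hZ, h0 Z hZ]
      · simp [hZ]

/-- Spending `i` units of budget on a set of size `i` with `4 ^ (i + 1)` attempts does not increase
the potential: `5 / 6 = (2 / 3) * (5 / 4)` comes from success and the second term from failure. -/
lemma tries_bound (i : ℕ) (hi : 1 ≤ i) :
    (5 / 6 : ℝ) ^ i + (1 - (1 / 2) ^ i) ^ (4 ^ (i + 1)) * (5 / 4) ^ i ≤ 1 := by
  set q : ℝ := (1 / 2) ^ i with hq
  have hq0 : 0 < q := by positivity
  have hq1 : q ≤ 1 := pow_le_one₀ (by norm_num) (by norm_num)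
  have hM : (1 - q) ^ (4 ^ (i + 1)) * (4 * 2 ^ i) ≤ 1 := by
    have h1 : (4 * 2 ^ i : ℝ) ≤ (1 + q) ^ (4 ^ (i + 1)) := by
      refine le_trans ?_ (one_add_mul_le_pow (by linarith) _)
      have : ((4 ^ (i + 1) : ℕ) : ℝ) * q = 4 * 2 ^ i := by
        rw [hq]; push_cast
        rw [pow_succ, mul_right_comm, ← mul_pow]; norm_num; ring
      linarith
    calc (1 - q) ^ (4 ^ (i + 1)) * (4 * 2 ^ i)
        ≤ (1 - q) ^ (4 ^ (i + 1)) * (1 + q) ^ (4 ^ (i + 1)) :=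
          mul_le_mul_of_nonneg_left h1 (pow_nonneg (by linarith) _)
      _ = (1 - q ^ 2) ^ (4 ^ (i + 1)) := by rw [← mul_pow]; ring_nf
      _ ≤ 1 := pow_le_one₀ (by nlinarith) (by nlinarith)
  have h56 : (5 / 6 : ℝ) ^ i ≤ 5 / 6 := by
    simpa using pow_le_pow_of_le_one (by norm_num : (0 : ℝ) ≤ 5 / 6) (by norm_num) hi
  have h58 : (5 / 8 : ℝ) ^ i ≤ 5 / 8 := by
    simpa using pow_le_pow_of_le_one (by norm_num : (0 : ℝ) ≤ 5 / 8) (by norm_num) hi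
  have h54 : (5 / 4 : ℝ) ^ i = (5 / 8) ^ i * 2 ^ i := by rw [← mul_pow]; norm_num
  rw [h54]
  have hp : 0 ≤ (1 - q) ^ (4 ^ (i + 1)) * 2 ^ i :=
    mul_nonneg (pow_nonneg (by linarith) _) (by positivity)
  have : (1 - q) ^ (4 ^ (i + 1)) * ((5 / 8) ^ i * 2 ^ i) ≤ 5 / 8 * (1 / 4) := by
    calc (1 - q) ^ (4 ^ (i + 1)) * ((5 / 8) ^ i * 2 ^ i)
        = (5 / 8) ^ i * ((1 - q) ^ (4 ^ (i + 1)) * 2 ^ i) := by ring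
      _ ≤ 5 / 8 * (1 / 4) := by
          apply mul_le_mul h58 (by linarith) hp (by norm_num)
  linarith

lemma leaf_count (T : ℕ) :
    3 * ∑ i ∈ range T, 5 * 4 ^ (i + 1) * 64 ^ (T - (i + 1)) + 4 ^ T = 64 ^ T := by
  induction T with
  | zero => simp
  | succ T ih =>
    rw [sum_range_succ]
    have : ∀ i ∈ range T, 5 * 4 ^ (i + 1) * 64 ^ (T + 1 - (i + 1))
        = 64 * (5 * 4 ^ (i + 1) * 64 ^ (T - (i + 1))) := by
      intro i hi
      have hi := mem_range.mp hi
      rw [show T + 1 - (i + 1) = (T - (i + 1)) + 1 by omega, pow_succ]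
      ring
    rw [sum_congr rfl this, ← mul_sum]
    simp only [Nat.sub_self, pow_zero, mul_one]
    rw [pow_succ 64 T, ← ih]
    ring

lemma Solvable.mono_leaves {D : V → V → Prop} {W : V → V → ℝ} {L L' : ℕ} (H : Solvable D W L)
    (h : L ≤ L') : Solvable D W L' := by
  intro μ ν hμ hν
  obtain ⟨f, hf, hc⟩ := H μ ν hμ hν
  obtain ⟨k, rfl⟩ := Nat.exists_eq_add_of_le h
  exact ⟨f, hf.add_leaves k, hc⟩

/-- Disjointness with `64 ^ T` leaves. Alice announces `i = |f a|`: if `i = 0` the answer is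
`disjoint`, if `i > T` the players give up, and otherwise they run `solvable_tries` and continue
with budget `T - i`. -/
theorem solvable_small (T : ℕ) : ∀ f g : V → Finset (Fin n),
    Solvable (DisjRel f g) (pot 3 2 T f g) (64 ^ T) := by
  induction T using Nat.strong_induction_on with
  | _ T ih =>
  intro f g
  rcases Nat.eq_zero_or_pos T with rfl | hT
  · refine (solvable_leaf (DisjRel f g) false).mono fun a b => ?_
    unfold loss pot
    by_cases hD : DisjRel f g a b
    · simp only [hD, if_true, pow_zero, mul_one]
      simp only [Bool.false_eq_true, iff_false, not_true, if_false]
      have h3 : (1 : ℝ) ≤ 3 ^ (f a).card := one_le_pow₀ (by norm_num)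
      have h2 : (1 : ℝ) ≤ 2 ^ (g b).card := one_le_pow₀ (by norm_num)
      nlinarith
    · simp [hD]
  set W : ℕ → V → V → ℝ := fun i a b =>
    if i = 0 then loss (DisjRel f g a b) true
    else if i ≤ T then pot 2 2 (T - i) f g a b +
      (1 - (1 / 2) ^ (f a).card) ^ (4 ^ (i + 1)) * pot 3 2 (T - i) f g a b
    else loss (DisjRel f g a b) false with hW
  set L : ℕ → ℕ := fun i =>
    if i = 0 then 1 else if i ≤ T then (4 ^ (i + 1) + 1) * 64 ^ (T - i) else 1 with hL
  have H : ∀ i ≤ T + 1, Solvable (DisjRel f g) (W i) (L i) := by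
    intro i _
    by_cases h0 : i = 0
    · simp only [hW, hL, if_pos h0]
      exact solvable_leaf _ true
    · by_cases hiT : i ≤ T
      · simp only [hW, hL, if_neg h0, if_pos hiT]
        exact solvable_tries (T - i) _ (ih (T - i) (by omega)) f g _
      · simp only [hW, hL, if_neg h0, if_neg hiT]
        exact solvable_leaf _ false
  have main := Solvable.multi (T + 1) H (fun a => min (f a).card (T + 1)) (fun a => by simp)
  have hcount : ∑ i ∈ range (T + 1 + 1), L i ≤ 64 ^ T := by
    rw [sum_range_succ, sum_range_succ']
    have h1 : L 0 = 1 := by simp [hL]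
    have h2 : L (T + 1) = 1 := by simp [hL]
    have h3 : ∑ i ∈ range T, L (i + 1) ≤ ∑ i ∈ range T, 5 * 4 ^ (i + 1) * 64 ^ (T - (i + 1)) := by
      refine sum_le_sum fun i hi => ?_
      have hi := mem_range.mp hi
      simp only [hL, if_neg (Nat.succ_ne_zero i), if_pos (Nat.succ_le_of_lt hi)]
      refine Nat.mul_le_mul_right _ ?_
      have : 1 ≤ 4 ^ (i + 1) := Nat.one_le_pow _ _ (by norm_num)
      rw [pow_succ 4 (i + 1)]
      omega
    have h4 := leaf_count T
    have h5 : 64 ^ 1 ≤ 64 ^ T := Nat.pow_le_pow_right (by norm_num) hT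
    have h6 : 0 ≤ 4 ^ T := Nat.zero_le _
    rw [h1, h2]
    linarith
  refine (main.mono_leaves hcount).mono fun a b => ?_
  simp only [hW]
  by_cases h0 : (f a).card = 0
  · have : DisjRel f g a b := by
      rw [card_eq_zero] at h0
      simp [DisjRel, h0]
    simp only [h0, Nat.zero_min, if_true]
    refine le_trans (le_of_eq ?_) (pot_nonneg (by norm_num) (by norm_num) _ _ _ _ _)
    simp [loss, this]
  by_cases hiT : (f a).card ≤ T
  · rw [min_eq_left (by omega), if_neg h0, if_pos hiT]
    unfold pot
    split_ifs with hD
    · set i := (f a).card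
      have hb := tries_bound i (by omega)
      have e1 : (4 / 5 : ℝ) ^ (T - i) = (4 / 5) ^ T * (5 / 4) ^ i := by
        nth_rewrite 2 [← Nat.sub_add_cancel hiT]
        rw [pow_add, mul_assoc, ← mul_pow]; norm_num
      have e2 : (2 : ℝ) ^ i * (5 / 4) ^ i = 3 ^ i * (5 / 6) ^ i := by
        rw [← mul_pow, ← mul_pow]; norm_num
      rw [e1]
      calc _ = 3 ^ i * 2 ^ (g b).card * (4 / 5) ^ T *
            ((5 / 6) ^ i + (1 - (1 / 2) ^ i) ^ (4 ^ (i + 1)) * (5 / 4) ^ i) := by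
              linear_combination (2 ^ (g b).card * (4 / 5) ^ T) * e2
        _ ≤ 3 ^ i * 2 ^ (g b).card * (4 / 5) ^ T * 1 :=
              mul_le_mul_of_nonneg_left hb (by positivity)
        _ = _ := mul_one _
    · simp
  · rw [min_eq_right (by omega), if_neg (by omega), if_neg (by omega)]
    unfold loss pot
    by_cases hD : DisjRel f g a b
    · simp only [hD, if_true]
      simp only [Bool.false_eq_true, iff_false, not_true, if_false]
      have h3 : (3 : ℝ) ^ T ≤ 3 ^ (f a).card := pow_le_pow_right₀ (by norm_num) (by omega)
      have h2 : (1 : ℝ) ≤ 2 ^ (g b).card := one_le_pow₀ (by norm_num)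
      have h4 : (1 : ℝ) ≤ 3 ^ T * (4 / 5) ^ T := by
        rw [← mul_pow]; exact one_le_pow₀ (by norm_num)
      calc (1 : ℝ) ≤ 3 ^ T * 1 * (4 / 5) ^ T := by linarith
        _ ≤ 3 ^ (f a).card * 2 ^ (g b).card * (4 / 5) ^ T := by gcongr
    · simp [hD]

end

/-! ### Reduction to small sets -/

section
variable {V : Type} [Fintype V] {n : ℕ}

/-- A protocol for `DisjRel f g` within the bounds valid when at most `t` further `yes` and `r`
further `no` answers to pivot questions are possible; `M` bounds the leaves of a final stage. -/
def PhaseGoal (ε M : ℝ) (t r : ℕ) (f g : V → Finset (Fin n)) (μ ν : V → ℝ) : Prop :=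
  ∃ h L, Protocol h L ∧ (L : ℝ) ≤ M * ((2 / ε) ^ t * (1 + ε) ^ r) ∧
    cost μ ν (fun a b => loss (DisjRel f g a b) (h a b)) ≤
      (∑ a, μ a) * (∑ b, ν b) * (3 * ε + 2 ^ t * (1 - ε / 2) ^ r)

/-- `PhaseGoal` holds for all set systems on a ground set of at most `t * s` points. -/
def Phase (V : Type) [Fintype V] (n : ℕ) (ε M : ℝ) (s t r : ℕ) : Prop :=
  ∀ (X : Finset (Fin n)) (f g : V → Finset (Fin n)), (∀ a, f a ⊆ X) → (∀ b, g b ⊆ X) →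
    X.card ≤ t * s → ∀ μ ν : V → ℝ, (∀ a, 0 ≤ μ a) → (∀ b, 0 ≤ ν b) → PhaseGoal ε M t r f g μ ν

lemma loss_swap {V : Type} (f g : V → Finset (Fin n)) (a b : V) (c : Bool) :
    loss (DisjRel f g a b) c = loss (DisjRel g f b a) c := by
  unfold loss; rw [disjRel_swap]

lemma PhaseGoal.swap {ε M : ℝ} {t r : ℕ} {f g : V → Finset (Fin n)} {μ ν : V → ℝ}
    (H : PhaseGoal ε M t r f g μ ν) : PhaseGoal ε M t r g f ν μ := by
  obtain ⟨h, L, hL, hLM, hc⟩ := H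
  refine ⟨_, L, hL.swap, hLM, ?_⟩
  rw [cost_swap, mul_comm (∑ a, ν a)]
  simpa only [loss_swap g f] using hc

/-- One pivot question: Alice announces whether `f a` is disjoint from the large set `g b₀`, which is
true for at least an `ε`-fraction of her mass. If so, the points of `g b₀` can be discarded. -/
lemma phase_pivot {ε M : ℝ} (hε : 0 < ε) (hε1 : ε ≤ 1) (hM : 0 ≤ M) {s t r : ℕ}
    (H₁ : Phase V n ε M s t (r + 1)) (H₂ : Phase V n ε M s (t + 1) r)
    {X : Finset (Fin n)} {f g : V → Finset (Fin n)} (hf : ∀ a, f a ⊆ X) (hg : ∀ b, g b ⊆ X)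
    (hX : X.card ≤ (t + 1) * s) {μ ν : V → ℝ} (hμ : ∀ a, 0 ≤ μ a) (hν : ∀ b, 0 ≤ ν b)
    (b₀ : V) (hb₀ : s ≤ (g b₀).card)
    (hpiv : ε * ∑ a, μ a ≤ ∑ a, if DisjRel f g a b₀ then μ a else 0) :
    PhaseGoal ε M (t + 1) (r + 1) f g μ ν := by
  set p : V → Prop := fun a => DisjRel f g a b₀ with hp
  have hμ₁ : ∀ a, 0 ≤ (if p a then μ a else 0) := fun a => by split_ifs <;> simp [hμ]
  have hμ₂ : ∀ a, 0 ≤ (if p a then 0 else μ a) := fun a => by split_ifs <;> simp [hμ]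
  have hcard : (X \ g b₀).card ≤ t * s := by
    rw [card_sdiff_of_subset (hg b₀)]
    have : (t + 1) * s = t * s + s := by ring
    omega
  obtain ⟨h₁, L₁, hL₁, hLM₁, hc₁⟩ := H₁ (X \ g b₀) (fun a => f a \ g b₀) (fun b => g b \ g b₀)
    (fun a => sdiff_subset_sdiff (hf a) le_rfl) (fun b => sdiff_subset_sdiff (hg b) le_rfl) hcard
    _ ν hμ₁ hν
  obtain ⟨h₂, L₂, hL₂, hLM₂, hc₂⟩ := H₂ X f g hf hg hX _ ν hμ₂ hν
  refine ⟨_, _, .alice p hL₁ hL₂, ?_, ?_⟩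
  · push_cast
    refine (add_le_add hLM₁ hLM₂).trans ?_
    rw [← mul_add]
    refine mul_le_mul_of_nonneg_left ?_ hM
    have hu : 0 ≤ (2 / ε) ^ t * (1 + ε) ^ r := by positivity
    have e : (2 / ε) * ε = 2 := by field_simp
    have h2 : (0 : ℝ) < 2 / ε := by positivity
    rw [pow_succ, pow_succ]
    have key : (1 + ε) + 2 / ε ≤ (2 / ε) * (1 + ε) := by nlinarith
    calc (2 / ε) ^ t * ((1 + ε) ^ r * (1 + ε)) + (2 / ε) ^ t * (2 / ε) * (1 + ε) ^ r
        = (2 / ε) ^ t * (1 + ε) ^ r * ((1 + ε) + 2 / ε) := by ring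
      _ ≤ (2 / ε) ^ t * (1 + ε) ^ r * ((2 / ε) * (1 + ε)) := mul_le_mul_of_nonneg_left key hu
      _ = _ := by ring
  · rw [cost_split p]
    have e₁ : cost (fun a => if p a then μ a else 0) ν
        (fun a b => loss (DisjRel f g a b) (if p a then h₁ a b else h₂ a b)) =
        cost (fun a => if p a then μ a else 0) ν (fun a b =>
          loss (DisjRel (fun a => f a \ g b₀) (fun b => g b \ g b₀) a b) (h₁ a b)) := by
      refine cost_congr fun a b ha => ?_
      have hpa : p a := by by_contra h; simp [h] at ha
      have hd : Disjoint (f a) (g b₀) := hpa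
      have : DisjRel f g a b ↔ DisjRel (fun a => f a \ g b₀) (fun b => g b \ g b₀) a b := by
        unfold DisjRel
        simp only [Finset.disjoint_left, mem_sdiff] at hd ⊢
        constructor
        · intro h u hu hu'
          exact h hu.1 hu'.1
        · intro h u hu hu'
          exact h ⟨hu, hd hu⟩ ⟨hu', hd hu⟩
      simp only [if_pos hpa, this]
    have e₂ : cost (fun a => if p a then 0 else μ a) ν
        (fun a b => loss (DisjRel f g a b) (if p a then h₁ a b else h₂ a b)) =
        cost (fun a => if p a then 0 else μ a) ν (fun a b => loss (DisjRel f g a b) (h₂ a b)) := by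
      refine cost_congr fun a b ha => ?_
      have hpa : ¬ p a := by intro h; simp [h] at ha
      simp only [if_neg hpa]
    rw [e₁, e₂]
    refine (add_le_add hc₁ hc₂).trans ?_
    have hm : ∑ a, μ a = (∑ a, if p a then μ a else 0) + ∑ a, if p a then 0 else μ a := by
      rw [← sum_add_distrib]
      exact sum_congr rfl fun a _ => by split_ifs <;> simp
    have hpiv' : ε * ∑ a, μ a ≤ ∑ a, if p a then μ a else 0 := hpiv
    rw [hm] at hpiv' ⊢
    have hm₁ := sum_nonneg (s := univ) fun a _ => hμ₁ a
    have hm₂ := sum_nonneg (s := univ) fun a _ => hμ₂ a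
    have hN := sum_nonneg (s := univ) fun b _ => hν b
    generalize (∑ a, if p a then μ a else 0) = m₁ at *
    generalize (∑ a, if p a then 0 else μ a) = m₂ at *
    generalize (∑ b, ν b) = N at *
    have hu : 0 ≤ N * (2 ^ t * (1 - ε / 2) ^ r) :=
      mul_nonneg hN (mul_nonneg (by positivity) (pow_nonneg (by linarith) _))
    have key : m₁ * (1 - ε / 2) + m₂ * 2 ≤ (m₁ + m₂) * (2 * (1 - ε / 2)) := by nlinarith
    have := mul_le_mul_of_nonneg_left key hu
    rw [pow_succ, pow_succ]
    linear_combination this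

/-- The situation without pivots: every set of size at least `s` is disjoint from at most an
`ε`-fraction of the other side, so only pairs of small sets need work. -/
lemma phase_final {ε : ℝ} (hε : 0 < ε) (hε1 : ε ≤ 1) {s T : ℕ}
    (hT : 6 ^ s * (4 / 5 : ℝ) ^ T ≤ ε) (t r : ℕ) {f g : V → Finset (Fin n)}
    {μ ν : V → ℝ} (hμ : ∀ a, 0 ≤ μ a) (hν : ∀ b, 0 ≤ ν b)
    (h₁ : ∀ b, s ≤ (g b).card → ∑ a, (if DisjRel f g a b then μ a else 0) ≤ ε * ∑ a, μ a)
    (h₂ : ∀ a, s ≤ (f a).card → ∑ b, (if DisjRel f g a b then ν b else 0) ≤ ε * ∑ b, ν b) :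
    PhaseGoal ε (64 ^ T + 2) t r f g μ ν := by
  obtain ⟨h, hh, hc⟩ := solvable_small T f g
    (fun a => if s ≤ (f a).card then 0 else μ a) (fun b => if s ≤ (g b).card then 0 else ν b)
    (fun a => by split_ifs <;> simp [hμ]) (fun b => by split_ifs <;> simp [hν])
  refine ⟨_, _, .alice (fun a => s ≤ (f a).card) (.leaf false)
    (.bob (fun b => s ≤ (g b).card) (.leaf false) hh), ?_, ?_⟩
  · push_cast
    have h1 : (1 : ℝ) ≤ (2 / ε) ^ t := one_le_pow₀ (by rw [le_div_iff₀ hε]; linarith)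
    have h2 : (1 : ℝ) ≤ (1 + ε) ^ r := one_le_pow₀ (by linarith)
    have h3 : (1 : ℝ) ≤ (2 / ε) ^ t * (1 + ε) ^ r := by nlinarith
    have h4 : (0 : ℝ) < 64 ^ T + 2 := by positivity
    nlinarith
  · have hSμ := sum_nonneg (s := univ) fun a _ => hμ a
    have hSν := sum_nonneg (s := univ) fun a _ => hν a
    have hc' : cost (fun a => if s ≤ (f a).card then 0 else μ a)
        (fun b => if s ≤ (g b).card then 0 else ν b) (pot 3 2 T f g) ≤
        (∑ a, μ a) * (∑ b, ν b) * ε := by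
      rw [← cost_const]
      refine sum_le_sum fun a _ => sum_le_sum fun b _ => ?_
      have hab := mul_nonneg (hμ a) (hν b)
      by_cases ha : s ≤ (f a).card
      · simp only [if_pos ha, zero_mul]; positivity
      by_cases hb : s ≤ (g b).card
      · simp only [if_pos hb, mul_zero, zero_mul]; positivity
      simp only [if_neg ha, if_neg hb]
      refine mul_le_mul_of_nonneg_left (le_trans ?_ hT) hab
      unfold pot
      split_ifs
      · rw [show (6 : ℝ) = 3 * 2 by norm_num, mul_pow]
        gcongr <;> first | omega | norm_num
      · positivity
    have hA : ∑ a, ∑ b, μ a * (if s ≤ (f a).card ∧ DisjRel f g a b then ν b else 0) ≤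
        (∑ a, μ a) * (∑ b, ν b) * ε := by
      rw [mul_assoc, sum_mul]
      refine sum_le_sum fun a _ => ?_
      rw [← mul_sum]
      refine mul_le_mul_of_nonneg_left ?_ (hμ a)
      by_cases ha : s ≤ (f a).card
      · simp only [ha, true_and]
        exact (h₂ a ha).trans (le_of_eq (by ring))
      · simp only [ha, false_and, if_false, sum_const_zero]; positivity
    have hB : ∑ a, ∑ b, ν b * (if s ≤ (g b).card ∧ DisjRel f g a b then μ a else 0) ≤
        (∑ a, μ a) * (∑ b, ν b) * ε := by
      rw [sum_comm, mul_comm (∑ a, μ a), mul_assoc, sum_mul]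
      refine sum_le_sum fun b _ => ?_
      rw [← mul_sum]
      refine mul_le_mul_of_nonneg_left ?_ (hν b)
      by_cases hb : s ≤ (g b).card
      · simp only [hb, true_and]
        exact (h₁ b hb).trans (le_of_eq (by ring))
      · simp only [hb, false_and, if_false, sum_const_zero]; positivity
    have hsum : cost μ ν (fun a b => loss (DisjRel f g a b)
        (if s ≤ (f a).card then false else if s ≤ (g b).card then false else h a b)) ≤
        ∑ a, ∑ b, μ a * (if s ≤ (f a).card ∧ DisjRel f g a b then ν b else 0) +
        ∑ a, ∑ b, ν b * (if s ≤ (g b).card ∧ DisjRel f g a b then μ a else 0) +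
        cost (fun a => if s ≤ (f a).card then 0 else μ a)
          (fun b => if s ≤ (g b).card then 0 else ν b)
          (fun a b => loss (DisjRel f g a b) (h a b)) := by
      unfold cost
      rw [← sum_add_distrib, ← sum_add_distrib]
      refine sum_le_sum fun a _ => ?_
      rw [← sum_add_distrib, ← sum_add_distrib]
      refine sum_le_sum fun b _ => ?_
      have hab := mul_nonneg (hμ a) (hν b)
      by_cases ha : s ≤ (f a).card
      · by_cases hD : DisjRel f g a b
        · by_cases hb : s ≤ (g b).card <;> simp [ha, hb, hD, loss] <;> nlinarith
        · by_cases hb : s ≤ (g b).card <;> simp [ha, hb, hD, loss]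
      · by_cases hb : s ≤ (g b).card
        · by_cases hD : DisjRel f g a b <;> simp [ha, hb, hD, loss] <;> nlinarith
        · simp [ha, hb]
    have hpos : 0 ≤ (∑ a, μ a) * (∑ b, ν b) * (2 ^ t * (1 - ε / 2) ^ r) :=
      mul_nonneg (mul_nonneg hSμ hSν) (mul_nonneg (by positivity) (pow_nonneg (by linarith) _))
    -- the two sides differ only in the decidability instances of the `if`s
    calc _ = _ := by congr!
      _ ≤ _ := hsum
      _ ≤ _ := by linarith

/-- Pivot questions are asked while possible. After the last admissible `no` (`r = 0`) the error is
bounded trivially; for `t = 0` the ground set is empty and there are no pivots. -/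
theorem phase {ε : ℝ} (hε : 0 < ε) (hε1 : ε ≤ 1) {s T : ℕ} (hs : 0 < s)
    (hT : 6 ^ s * (4 / 5 : ℝ) ^ T ≤ ε) (t r : ℕ) : Phase V n ε (64 ^ T + 2) s t r := by
  have hM : (0 : ℝ) ≤ 64 ^ T + 2 := by positivity
  induction hN : t + r using Nat.strong_induction_on generalizing t r with
  | _ N ih =>
  intro X f g hf hg hX μ ν hμ hν
  rcases r with _ | r
  · refine ⟨_, _, .leaf false, ?_, ?_⟩
    · have h1 : (1 : ℝ) ≤ (2 / ε) ^ t := one_le_pow₀ (by rw [le_div_iff₀ hε]; linarith)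
      have h2 : (0 : ℝ) ≤ 64 ^ T := by positivity
      push_cast
      simp only [pow_zero, mul_one]
      nlinarith
    · refine (cost_mono hμ hν fun a b => loss_le_one _ _).trans ?_
      rw [cost_const]
      have h1 : (1 : ℝ) ≤ 2 ^ t := one_le_pow₀ (by norm_num)
      refine mul_le_mul_of_nonneg_left (by simp only [pow_zero, mul_one]; linarith)
        (mul_nonneg (sum_nonneg fun a _ => hμ a) (sum_nonneg fun a _ => hν a))
  by_cases h₁ : ∀ b, s ≤ (g b).card →
      ∑ a, (if DisjRel f g a b then μ a else 0) ≤ ε * ∑ a, μ a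
  · by_cases h₂ : ∀ a, s ≤ (f a).card →
        ∑ b, (if DisjRel f g a b then ν b else 0) ≤ ε * ∑ b, ν b
    · exact phase_final hε hε1 hT t (r + 1) hμ hν h₁ h₂
    · push Not at h₂
      obtain ⟨a₀, ha₀, hlt⟩ := h₂
      have hXc := card_le_card (hf a₀)
      rcases t with _ | t
      · omega
      · simp only [disjRel_swap f g] at hlt
        exact (phase_pivot hε hε1 hM (ih _ (by omega) t (r + 1) rfl)
          (ih _ (by omega) (t + 1) r rfl)
            hg hf hX hν hμ a₀ ha₀ hlt.le).swap
  · push Not at h₁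
    obtain ⟨b₀, hb₀, hlt⟩ := h₁
    have hXc := card_le_card (hg b₀)
    rcases t with _ | t
    · omega
    · exact phase_pivot hε hε1 hM (ih _ (by omega) t (r + 1) rfl)
          (ih _ (by omega) (t + 1) r rfl)
          hf hg hX hμ hν b₀ hb₀ hlt.le

end

/-! ### Choice of parameters -/

/-- The leaves of a protocol as a labelled partition into rectangles whose total error is the error
of the protocol. -/
lemma Protocol.exists_partition {n : ℕ} {h : Finset (Fin n) → Finset (Fin n) → Bool} {L : ℕ}
    (H : Protocol h L) (μ ν : Finset (Fin n) → ℝ) :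
    ∃ ℱ 𝒢 : Fin L → Finset (Finset (Fin n)), ∃ b : Fin L → Bool,
      (∀ i j, i ≠ j → Disjoint (ℱ i ×ˢ 𝒢 i) (ℱ j ×ˢ 𝒢 j)) ∧
      (∀ p : Finset (Fin n) × Finset (Fin n), ∃ i, p ∈ ℱ i ×ˢ 𝒢 i) ∧
      ∑ i, ∑ p ∈ ℱ i ×ˢ 𝒢 i, (if (Disjoint p.1 p.2 ↔ b i = true) then 0 else μ p.1 * ν p.2)
        = cost μ ν (fun A B => loss (Disjoint A B) (h A B)) := by
  obtain ⟨ι, _, F, G, c, hcard, hu, hh⟩ := H.exists_rectangles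
  let e : Fin L ≃ ι := (Fintype.equivFinOfCardEq hcard).symm
  refine ⟨F ∘ e, G ∘ e, c ∘ e, ?_, ?_, ?_⟩
  · intro i j hij
    rw [Finset.disjoint_left]
    rintro ⟨A, B⟩ h1 h2
    rw [mem_product] at h1 h2
    exact hij (e.injective ((hu A B).unique h1 h2))
  · rintro ⟨A, B⟩
    obtain ⟨i, hi, -⟩ := hu A B
    exact ⟨e.symm i, by simpa using hi⟩
  · have h1 : ∀ i, ∀ p ∈ (F ∘ e) i ×ˢ (G ∘ e) i,
        (if (Disjoint p.1 p.2 ↔ (c ∘ e) i = true) then 0 else μ p.1 * ν p.2)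
          = μ p.1 * ν p.2 * loss (Disjoint p.1 p.2) (h p.1 p.2) := by
      rintro i ⟨A, B⟩ hp
      rw [mem_product] at hp
      rw [hh (e i) A B hp.1 hp.2]
      unfold loss
      simp only [Function.comp]
      split_ifs <;> simp
    rw [sum_congr rfl fun i _ => sum_congr rfl (h1 i)]
    rw [← Finset.sum_biUnion]
    · have : (univ.biUnion fun i => (F ∘ e) i ×ˢ (G ∘ e) i) = univ := by
        ext ⟨A, B⟩
        obtain ⟨i, hi, -⟩ := hu A B
        simp only [mem_biUnion, mem_univ, true_and, iff_true]
        exact ⟨e.symm i, by simpa using hi⟩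
      rw [this, Fintype.sum_prod_type]
      rfl
    · intro i _ j _ hij
      change Disjoint _ _
      rw [Finset.disjoint_left]
      rintro ⟨A, B⟩ h1 h2
      rw [mem_product] at h1 h2
      exact hij (e.injective ((hu A B).unique h1 h2))

/-- Alice announces her set and Bob the answer. -/
lemma solvable_exact (n : ℕ) :
    Solvable (fun A B : Finset (Fin n) => Disjoint A B) (fun _ _ => 0) (2 * 2 ^ n) := by
  have hpos : 2 ^ n - 1 + 1 = 2 ^ n := Nat.sub_add_cancel Nat.one_le_two_pow
  let e : Finset (Fin n) ≃ Fin (2 ^ n) := Fintype.equivFinOfCardEq (by simp)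
  have H : ∀ i ≤ 2 ^ n - 1, Solvable (fun A B : Finset (Fin n) => Disjoint A B)
      (fun A _ => if (e A : ℕ) = i then 0 else 1) 2 := by
    intro i hi μ ν hμ hν
    refine ⟨_, .bob (fun B => Disjoint (e.symm ⟨i, by omega⟩) B) (.leaf true) (.leaf false),
      cost_mono hμ hν fun A B => ?_⟩
    split_ifs with h2 h1 h1
    · have : e.symm ⟨i, by omega⟩ = A := by
        rw [Equiv.symm_apply_eq]; exact Fin.ext h1.symm
      rw [this] at h2
      simp [loss, h2]
    · exact loss_le_one _ _
    · have : e.symm ⟨i, by omega⟩ = A := by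
        rw [Equiv.symm_apply_eq]; exact Fin.ext h1.symm
      rw [this] at h2
      simp [loss, h2]
    · exact loss_le_one _ _
  have := Solvable.multi (2 ^ n - 1) H (fun A => (e A : ℕ)) (fun A => by have := (e A).2; omega)
  rw [hpos] at this
  simpa [mul_comm] using this

/-- The protocol within the required bound. All factors of the leaf count are powers of `2` with
exponent a multiple of `s = ⌈√(n * k)⌉`, with sum `142 * s ≤ 284 * √(n * k)`. -/
lemma exists_protocol {n : ℕ} (hn : 0 < n) {μ ν : Finset (Fin n) → ℝ} (hμ : ∀ A, 0 ≤ μ A)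
    (hμ1 : ∑ A, μ A = 1) (hν : ∀ A, 0 ≤ ν A) (hν1 : ∑ A, ν A = 1) {ε : ℝ} (hε : 0 < ε)
    (hε2 : ε < 1 / 2) :
    ∃ h L, Protocol h L ∧ (L : ℝ) ≤ (2 : ℝ) ^ (284 * Real.sqrt (n * Real.logb 2 (1 / ε))) ∧
      cost μ ν (fun A B => loss (Disjoint A B) (h A B)) ≤ ε := by
  set k := Real.logb 2 (1 / ε) with hk
  have hεk : (2 : ℝ) ^ k = 1 / ε := Real.rpow_logb (by norm_num) (by norm_num) (by positivity)
  have hk1 : 1 ≤ k := by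
    rw [hk, Real.le_logb_iff_rpow_le (by norm_num) (by positivity), Real.rpow_one,
      le_div_iff₀ hε]
    linarith
  have hn1 : (1 : ℝ) ≤ n := by exact_mod_cast hn
  have hn0 : (0 : ℝ) ≤ n := by linarith
  set Q := Real.sqrt (n * k) with hQ
  have hQ0 : 0 ≤ Q := Real.sqrt_nonneg _
  have hQ2 : Q ^ 2 = n * k := Real.sq_sqrt (by positivity)
  have hQ1 : 1 ≤ Q := by nlinarith
  rcases lt_or_ge (n : ℝ) k with hnk | hkn
  · obtain ⟨h, hh, hc⟩ := solvable_exact n μ ν hμ hν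
    refine ⟨h, _, hh, ?_, hc.trans ?_⟩
    · have hQn : (n : ℝ) ≤ Q := by
        rw [hQ]; exact Real.le_sqrt_of_sq_le (by nlinarith)
      push_cast
      calc (2 : ℝ) * 2 ^ n = (2 : ℝ) ^ ((n + 1 : ℕ) : ℝ) := by rw [Real.rpow_natCast, pow_succ]; ring
        _ ≤ (2 : ℝ) ^ (284 * Q) := by
          apply Real.rpow_le_rpow_of_exponent_le (by norm_num)
          push_cast; linarith
    · rw [cost_const]; simpa using hε.le
  have hkQ : k ≤ Q := by
    rw [hQ]; exact Real.le_sqrt_of_sq_le (by nlinarith)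
  set s := ⌈Q⌉₊ with hs
  have hQs : Q ≤ s := Nat.le_ceil _
  have hsQ : (s : ℝ) ≤ 2 * Q := by
    have := (Nat.ceil_lt_add_one hQ0).le
    linarith
  have hs1 : 1 ≤ s := by exact_mod_cast hQ1.trans hQs
  set q := Real.sqrt (n / k) with hq
  have hqk : q * k = Q := by
    have : Q = Real.sqrt (n / k * k ^ 2) := by rw [hQ]; congr 1; field_simp
    rw [this, Real.sqrt_mul (by positivity), Real.sqrt_sq (by linarith)]
  have hq0 : 0 ≤ q := Real.sqrt_nonneg _
  set t := ⌈q⌉₊ with ht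
  have hqt : q ≤ t := Nat.le_ceil _
  have hts : t ≤ s := Nat.ceil_mono (by nlinarith)
  have htk : (t : ℝ) * k ≤ 2 * s := by
    have := (Nat.ceil_lt_add_one hq0).le
    nlinarith
  have hcard : n ≤ t * s := by
    have h1 : (n : ℝ) = q * Q := by
      have : Q ^ 2 = q * Q * k := by rw [← hqk]; ring
      have h2 : (n : ℝ) * k = q * Q * k := by rw [← this, hQ2]
      exact mul_right_cancel₀ (by linarith) h2
    have h2 : (n : ℝ) ≤ (t : ℝ) * s := by
      rw [h1]; exact mul_le_mul hqt hQs hQ0 (by positivity)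
    exact_mod_cast h2
  -- small sets and the cut-off each cost `δ`, and large sets `2 * δ`
  set δ := ε / 4 with hδ
  have hδ0 : 0 < δ := by positivity
  have hδ1 : δ ≤ 1 := by rw [hδ]; linarith
  have hεs : 1 / ε ≤ 2 ^ s := by
    rw [← hεk, ← Real.rpow_natCast]
    exact Real.rpow_le_rpow_of_exponent_le (by norm_num) (by linarith)
  have hδinv : 1 / δ = 4 * (1 / ε) := by rw [hδ]; field_simp
  have hδs : 1 / δ ≤ 8 ^ s := by
    have h4 : (4 : ℝ) ≤ 4 ^ s := by
      simpa using pow_le_pow_right₀ (by norm_num : (1 : ℝ) ≤ 4) hs1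
    rw [hδinv, show (8 : ℝ) = 4 * 2 by norm_num, mul_pow]
    exact mul_le_mul h4 hεs (by positivity) (by positivity)
  have hT : 6 ^ s * (4 / 5 : ℝ) ^ (21 * s) ≤ δ := by
    have h8 : (1 / 8 : ℝ) ^ s ≤ δ := by
      rw [one_div, inv_pow]
      rw [one_div] at hδs
      exact inv_le_of_inv_le₀ hδ0 hδs
    refine le_trans ?_ h8
    rw [pow_mul, ← mul_pow]
    exact pow_le_pow_left₀ (by norm_num) (by norm_num) _
  set ℓ := Real.log (2 ^ t / δ) with hℓ
  -- `r` is chosen so that `2 ^ t * (1 - δ / 2) ^ r ≤ δ` while `(1 + δ) ^ r` is `O((2 ^ t / δ) ^ 2)`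
  set r := ⌈2 / δ * ℓ⌉₊ with hr
  have h2t : (1 : ℝ) ≤ 2 ^ t := one_le_pow₀ (by norm_num)
  have hpos : 0 < 2 ^ t / δ := by positivity
  have hℓ0 : 0 ≤ ℓ := Real.log_nonneg (by rw [le_div_iff₀ hδ0]; linarith)
  have hexp : Real.exp ℓ = 2 ^ t / δ := Real.exp_log hpos
  have hr1 : ℓ ≤ δ / 2 * r := by
    have h1 : 2 / δ * ℓ ≤ r := Nat.le_ceil _
    have h2 := mul_le_mul_of_nonneg_left h1 (show 0 ≤ δ / 2 by positivity)
    have h3 : δ / 2 * (2 / δ * ℓ) = ℓ := by field_simp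
    linarith
  have hr2 : δ * r ≤ 2 * ℓ + 1 := by
    have h1 : (r : ℝ) ≤ 2 / δ * ℓ + 1 := (Nat.ceil_lt_add_one (by positivity)).le
    have h2 := mul_le_mul_of_nonneg_left h1 hδ0.le
    have h3 : δ * (2 / δ * ℓ + 1) = 2 * ℓ + δ := by field_simp
    linarith
  obtain ⟨h, L, hL, hLM, hc⟩ := phase (V := Finset (Fin n)) (n := n) hδ0 hδ1 hs1 hT t r univ id id
    (fun _ => subset_univ _) (fun _ => subset_univ _) (by simpa using hcard) μ ν hμ hν
  refine ⟨h, L, hL, hLM.trans ?_, ?_⟩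
  · have b1 : (64 : ℝ) ^ (21 * s) + 2 ≤ 2 ^ (127 * s) := by
      have e1 : (64 : ℝ) ^ (21 * s) = 2 ^ (126 * s) := by
        rw [show (64 : ℝ) = 2 ^ 6 by norm_num, ← pow_mul]; ring_nf
      have e2 : (2 : ℝ) ≤ 2 ^ s := by
        simpa using pow_le_pow_right₀ (by norm_num : (1 : ℝ) ≤ 2) hs1
      have e3 : (2 : ℝ) ≤ 2 ^ (126 * s) := by
        simpa using pow_le_pow_right₀ (by norm_num : (1 : ℝ) ≤ 2) (show 1 ≤ 126 * s by omega)
      rw [e1, show 127 * s = 126 * s + s by ring, pow_add]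
      nlinarith
    have b2 : (2 / δ) ^ t ≤ (2 : ℝ) ^ (5 * s) := by
      have e1 : 2 / δ = 8 * (1 / ε) := by rw [hδ]; field_simp; norm_num
      have e2 : (1 / ε) ^ t ≤ (2 : ℝ) ^ (2 * s) := by
        rw [← hεk, ← Real.rpow_natCast, ← Real.rpow_mul (by norm_num), ← Real.rpow_natCast]
        apply Real.rpow_le_rpow_of_exponent_le (by norm_num)
        push_cast; linarith
      have e3 : (8 : ℝ) ^ t ≤ 2 ^ (3 * s) := by
        rw [pow_mul]
        norm_num
        exact pow_le_pow_right₀ (by norm_num) hts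
      rw [e1, mul_pow, show 5 * s = 3 * s + 2 * s by ring, pow_add]
      exact mul_le_mul e3 e2 (by positivity) (by positivity)
    have b3 : (1 + δ) ^ r ≤ (2 : ℝ) ^ (10 * s) := by
      have e1 : 2 ^ t / δ ≤ (2 : ℝ) ^ (4 * s) := by
        have f1 : (2 : ℝ) ^ t ≤ 2 ^ s := pow_le_pow_right₀ (by norm_num) hts
        rw [div_eq_mul_one_div, show 4 * s = s + 3 * s by ring, pow_add, pow_mul 2 3]
        norm_num at hδs ⊢
        exact mul_le_mul f1 hδs (by positivity) (by positivity)
      have e2 : Real.exp 1 ≤ (2 : ℝ) ^ (2 * s) := by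
        have f1 : (4 : ℝ) ≤ 4 ^ s := by
          simpa using pow_le_pow_right₀ (by norm_num : (1 : ℝ) ≤ 4) hs1
        rw [pow_mul]
        have := Real.exp_one_lt_d9
        norm_num at this ⊢
        linarith
      calc (1 + δ) ^ r ≤ (Real.exp δ) ^ r :=
            pow_le_pow_left₀ (by positivity) (by linarith [Real.add_one_le_exp δ]) _
        _ = Real.exp (δ * r) := by rw [← Real.exp_nat_mul]; ring_nf
        _ ≤ Real.exp (2 * ℓ + 1) := Real.exp_le_exp.mpr hr2
        _ = (2 ^ t / δ) ^ 2 * Real.exp 1 := by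
            rw [Real.exp_add, ← hexp, ← Real.exp_nat_mul]; norm_num
        _ ≤ (2 ^ (4 * s)) ^ 2 * 2 ^ (2 * s) := by gcongr
        _ = 2 ^ (10 * s) := by rw [← pow_mul, ← pow_add]; ring_nf
    calc ((64 : ℝ) ^ (21 * s) + 2) * ((2 / δ) ^ t * (1 + δ) ^ r)
        ≤ 2 ^ (127 * s) * (2 ^ (5 * s) * 2 ^ (10 * s)) := by gcongr
      _ = (2 : ℝ) ^ ((142 * s : ℕ) : ℝ) := by
          rw [Real.rpow_natCast, ← pow_add, ← pow_add]; ring_nf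
      _ ≤ (2 : ℝ) ^ (284 * Q) := by
          apply Real.rpow_le_rpow_of_exponent_le (by norm_num)
          push_cast; linarith
  · have e1 : 2 ^ t * (1 - δ / 2) ^ r ≤ δ := by
      have f1 : (1 - δ / 2) ^ r ≤ Real.exp (-ℓ) := by
        calc (1 - δ / 2) ^ r ≤ (Real.exp (-(δ / 2))) ^ r :=
              pow_le_pow_left₀ (by linarith) (by linarith [Real.add_one_le_exp (-(δ / 2))]) _
          _ = Real.exp (-(δ / 2 * r)) := by rw [← Real.exp_nat_mul]; ring_nf
          _ ≤ Real.exp (-ℓ) := Real.exp_le_exp.mpr (by linarith)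
      rw [Real.exp_neg, hexp, inv_div] at f1
      calc 2 ^ t * (1 - δ / 2) ^ r ≤ 2 ^ t * (δ / 2 ^ t) := by gcongr
        _ = δ := by field_simp
    rw [hμ1, hν1] at hc
    have hc' : cost μ ν (fun A B => loss (Disjoint A B) (h A B)) ≤
        1 * 1 * (3 * δ + 2 ^ t * (1 - δ / 2) ^ r) := hc
    rw [hδ] at *
    linarith

/-- for every product distribution `μA × μB` and error `ε ∈ (0, 1/2)`,
there is a partition of `2^[n] × 2^[n]` into at most `2^{C√(n log₂(1/ε))}` labeled
combinatorial rectangles computing disjointness with error at most `ε` under `μA × μB`. -/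
theorem statement11 :
    ∃ C : ℝ, 0 < C ∧ ∀ n : ℕ, 0 < n →
      ∀ μA μB : Finset (Fin n) → ℝ,
        (∀ A, 0 ≤ μA A) → (∑ A, μA A) = 1 →
        (∀ B, 0 ≤ μB B) → (∑ B, μB B) = 1 →
        ∀ ε : ℝ, 0 < ε → ε < 1 / 2 →
          ∃ m : ℕ, 0 < m ∧
            (m : ℝ) ≤ (2 : ℝ) ^ (C * Real.sqrt (n * Real.logb 2 (1 / ε))) ∧
            ∃ ℱ 𝒢 : Fin m → Finset (Finset (Fin n)), ∃ b : Fin m → Bool,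
              (∀ i j, i ≠ j → Disjoint (ℱ i ×ˢ 𝒢 i) (ℱ j ×ˢ 𝒢 j)) ∧
              (∀ p : Finset (Fin n) × Finset (Fin n), ∃ i, p ∈ ℱ i ×ˢ 𝒢 i) ∧
              ∑ i, ∑ p ∈ ℱ i ×ˢ 𝒢 i,
                  (if (Disjoint p.1 p.2 ↔ b i = true) then 0 else μA p.1 * μB p.2)
                ≤ ε := by
  refine ⟨284, by norm_num, fun n hn μA μB hA hA1 hB hB1 ε hε hε2 => ?_⟩
  obtain ⟨h, L, hL, hLb, hc⟩ := exists_protocol hn hA hA1 hB hB1 hε hε2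
  obtain ⟨ℱ, 𝒢, b, hdisj, hcov, hsum⟩ := hL.exists_partition μA μB
  exact ⟨L, hL.pos, hLb, ℱ, 𝒢, b, hdisj, hcov, hsum.le.trans hc⟩
end
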